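/- Let n ∈ ℕ, p⃗ = (p_1,…,p_n), q⃗ = (q_1,…,q_n) ∈ (1,∞)^n, and α⃗ = (α_1,…,α_n) ∈ ℝⁿ with α_i ∈ (-1/q_i, 1 - 1/q_i) for every i ∈ {1,…,n}. Then there exists a positive constant C such that for every measurable f : ℝⁿ → ℂ, ‖M_n(f)‖_{Ė^{α⃗,p⃗}_{q⃗}(ℝⁿ)} ≤ C ‖f‖_{Ė^{α⃗,p⃗}_{q⃗}(ℝⁿ)}, where M_n is the maximal operator acting in the n-th variable. -/

import Mathlib

open MeasureTheory ENNReal Filter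

noncomputable section

/-- The dyadic annulus `R_k = (-2^k, 2^k) \ (-2^(k-1), 2^(k-1))` in `ℝ`. -/
def herzRing (k : ℤ) : Set ℝ :=
  Set.Ioo (-(2 : ℝ) ^ k) ((2 : ℝ) ^ k) \ Set.Ioo (-(2 : ℝ) ^ (k - 1)) ((2 : ℝ) ^ (k - 1))

/-- The `L^q` "norm" (valued in `ℝ≥0∞`) of an `ℝ≥0∞`-valued function on a set `s ⊆ ℝ`,
with the usual modification when `q = ∞`. -/
def lqNormOn (q : ℝ≥0∞) (s : Set ℝ) (g : ℝ → ℝ≥0∞) : ℝ≥0∞ :=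
  if q = ∞ then essSup (s.indicator g) volume
  else (∫⁻ x in s, g x ^ q.toReal) ^ (1 / q.toReal)

/-- The `l^p` norm over `ℤ` of an `ℝ≥0∞`-valued sequence, with the usual modification
when `p = ∞`. -/
def lpZNorm (p : ℝ≥0∞) (a : ℤ → ℝ≥0∞) : ℝ≥0∞ :=
  if p = ∞ then ⨆ k, a k
  else (∑' k : ℤ, a k ^ p.toReal) ^ (1 / p.toReal)

/-- The one-dimensional Herz norm `K^{α,p}_q` of an `ℝ≥0∞`-valued function on `ℝ`. -/
def herzNorm1 (α : ℝ) (p q : ℝ≥0∞) (g : ℝ → ℝ≥0∞) : ℝ≥0∞ :=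
  lpZNorm p fun k => ENNReal.ofReal ((2 : ℝ) ^ ((k : ℝ) * α)) * lqNormOn q (herzRing k) g

/-- The mixed-norm Herz norm on `ℝⁿ` of an `ℝ≥0∞`-valued function: the Herz norm
`K^{α_1,p_1}_{q_1}` is applied in the first variable, then `K^{α_2,p_2}_{q_2}` in the
second variable, …, and finally `K^{α_n,p_n}_{q_n}` in the last variable. -/
def mixedHerzNormE : (n : ℕ) → (Fin n → ℝ) → (Fin n → ℝ≥0∞) → (Fin n → ℝ≥0∞) →
    ((Fin n → ℝ) → ℝ≥0∞) → ℝ≥0∞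
  | 0, _, _, _, f => f fun i => i.elim0
  | n + 1, α, p, q, f =>
    herzNorm1 (α (Fin.last n)) (p (Fin.last n)) (q (Fin.last n)) fun xlast =>
      mixedHerzNormE n (Fin.init α) (Fin.init p) (Fin.init q) fun y => f (Fin.snoc y xlast)

/-- The mixed-norm Herz norm `‖f‖_{Ė^{α,p}_q(ℝⁿ)}` of a complex-valued function on `ℝⁿ`. -/
def herzNormC (n : ℕ) (α : Fin n → ℝ) (p q : Fin n → ℝ≥0∞) (f : (Fin n → ℝ) → ℂ) : ℝ≥0∞ :=
  mixedHerzNormE n α p q fun x => (‖f x‖₊ : ℝ≥0∞)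

/-- `I_m = (-2^m, -2^{-m}] ∪ [2^{-m}, 2^m)`. -/
def herzI (m : ℕ) : Set ℝ :=
  Set.Ioc (-(2 : ℝ) ^ (m : ℤ)) (-(2 : ℝ) ^ (-(m : ℤ))) ∪
    Set.Ico ((2 : ℝ) ^ (-(m : ℤ))) ((2 : ℝ) ^ (m : ℤ))

/-- `A_m = I_m^n ⊆ ℝⁿ`. -/
def herzA (n m : ℕ) : Set (Fin n → ℝ) := Set.univ.pi fun _ => herzI m

/-- The class `H(ℝⁿ)` of simple functions built from finitely many pairwise disjoint
parallelepipeds contained in some `A_m`. -/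
def IsHSimple (n : ℕ) (f : (Fin n → ℝ) → ℂ) : Prop :=
  ∃ (m N : ℕ) (a : Fin N → ℂ) (E : Fin N → Fin n → Set ℝ),
    (∀ k i, MeasurableSet (E k i)) ∧
    (∀ k, Set.univ.pi (E k) ⊆ herzA n m) ∧
    (Pairwise fun k l => Disjoint (Set.univ.pi (E k)) (Set.univ.pi (E l))) ∧
    f = fun x => ∑ k, (Set.univ.pi (E k)).indicator (fun _ => a k) x

/-- The Euclidean ball `B(x,r)` in `ℝⁿ`. -/
def eucBall (n : ℕ) (x : Fin n → ℝ) (r : ℝ) : Set (Fin n → ℝ) :=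
  {y | ∑ i, (y i - x i) ^ 2 < r ^ 2}

/-- The (uncentered) maximal operator in the `k`-th variable. -/
def maxVar (n : ℕ) (k : Fin n) (g : (Fin n → ℝ) → ℝ≥0∞) : (Fin n → ℝ) → ℝ≥0∞ :=
  fun x => ⨆ (a : ℝ) (b : ℝ) (_ : x k ∈ Set.Ioo a b),
    (volume (Set.Ioo a b))⁻¹ * ∫⁻ y in Set.Ioo a b, g (Function.update x k y)

/-- The centered Hardy–Littlewood maximal operator on `ℝⁿ`. -/
def centeredMax (n : ℕ) (g : (Fin n → ℝ) → ℝ≥0∞) : (Fin n → ℝ) → ℝ≥0∞ :=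
  fun x => ⨆ (r : ℝ) (_ : 0 < r),
    (volume (eucBall n x r))⁻¹ * ∫⁻ y in eucBall n x r, g y

/-- The composition `M_n ∘ ⋯ ∘ M_1` of the maximal operators in each variable. -/
def iteratedMax (n : ℕ) (g : (Fin n → ℝ) → ℝ≥0∞) : (Fin n → ℝ) → ℝ≥0∞ :=
  (List.ofFn fun k : Fin n => maxVar n k).foldl (fun h F => F h) g

/-- The iterated maximal operator `ℳ_t(f) = [M_n ⋯ M_1(|f|^t)]^{1/t}`. -/
def iterMaxPow (n : ℕ) (t : ℝ) (f : (Fin n → ℝ) → ℂ) : (Fin n → ℝ) → ℝ≥0∞ :=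
  fun x => iteratedMax n (fun y => (‖f y‖₊ : ℝ≥0∞) ^ t) x ^ (1 / t)

/-- The `l^r`-Herz type mixed norm of a sequence of functions on `ℝⁿ`. -/
def herzSeqNorm (n : ℕ) (r : ℝ≥0∞) (α : Fin n → ℝ) (p q : Fin n → ℝ≥0∞)
    (F : ℤ → (Fin n → ℝ) → ℂ) : ℝ≥0∞ :=
  mixedHerzNormE n α p q fun x => lpZNorm r fun j => (‖F j x‖₊ : ℝ≥0∞)

/-- `N` is a ball quasi-Banach function norm on (nonnegative extended-real-valued)
measurable functions on `ℝⁿ`. -/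
def IsBQBFNorm (n : ℕ) (N : ((Fin n → ℝ) → ℝ≥0∞) → ℝ≥0∞) : Prop :=
  (∀ f : (Fin n → ℝ) → ℝ≥0∞, Measurable f → N f = 0 → f =ᵐ[volume] 0) ∧
  (∀ f g : (Fin n → ℝ) → ℝ≥0∞, Measurable f → Measurable g →
    (∀ᵐ x ∂volume, g x ≤ f x) → N g ≤ N f) ∧
  (∀ (fm : ℕ → (Fin n → ℝ) → ℝ≥0∞) (f : (Fin n → ℝ) → ℝ≥0∞),
    (∀ m, Measurable (fm m)) → Measurable f →
    (∀ᵐ x ∂volume, Monotone (fun m => fm m x) ∧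
      Tendsto (fun m => fm m x) atTop (nhds (f x))) →
    Monotone (fun m => N (fm m)) ∧ Tendsto (fun m => N (fm m)) atTop (nhds (N f))) ∧
  (∀ (x : Fin n → ℝ) (r : ℝ), 0 < r →
    N ((eucBall n x r).indicator fun _ => (1 : ℝ≥0∞)) ≠ ∞)

/-- `N` is a ball Banach function norm: a ball quasi-Banach function norm that moreover
satisfies the triangle inequality and locally dominates the `L¹` norm. -/
def IsBallBanachNorm (n : ℕ) (N : ((Fin n → ℝ) → ℝ≥0∞) → ℝ≥0∞) : Prop :=
  IsBQBFNorm n N ∧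
  (∀ f g : (Fin n → ℝ) → ℝ≥0∞, Measurable f → Measurable g → N (f + g) ≤ N f + N g) ∧
  (∀ (x : Fin n → ℝ) (r : ℝ), 0 < r → ∃ C : ℝ≥0∞, 0 < C ∧ C ≠ ∞ ∧
    ∀ f : (Fin n → ℝ) → ℝ≥0∞, Measurable f → (∫⁻ y in eucBall n x r, f y) ≤ C * N f)

/-- The associate (Köthe dual) norm of a function norm `N`. -/
def assocNormOf (n : ℕ) (N : ((Fin n → ℝ) → ℝ≥0∞) → ℝ≥0∞)
    (f : (Fin n → ℝ) → ℝ≥0∞) : ℝ≥0∞ :=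
  ⨆ (g : (Fin n → ℝ) → ℝ≥0∞) (_ : Measurable g) (_ : N g = 1), ∫⁻ x, f x * g x

/-- The `θ`-convexification of a function norm: `‖f‖_{X^θ} = ‖|f|^θ‖_X^{1/θ}`
(here stated with `θ` in place of `1/p`, so `X^{1/p}` is `convexPow n (1/p) N`). -/
def convexPow (n : ℕ) (θ : ℝ) (N : ((Fin n → ℝ) → ℝ≥0∞) → ℝ≥0∞)
    (f : (Fin n → ℝ) → ℝ≥0∞) : ℝ≥0∞ :=
  N (fun x => f x ^ θ) ^ (1 / θ)

/-- The associate space norm of the mixed-norm Herz space, for complex-valued functions. -/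
def herzAssocNormC (n : ℕ) (α : Fin n → ℝ) (p q : Fin n → ℝ≥0∞)
    (f : (Fin n → ℝ) → ℂ) : ℝ≥0∞ :=
  ⨆ (g : (Fin n → ℝ) → ℂ) (_ : Measurable g) (_ : herzNormC n α p q g = 1),
    ∫⁻ x, (‖f x * g x‖₊ : ℝ≥0∞)

/-- Uncentered maximal function with respect to a measure. -/
def hzM (μ : Measure ℝ) (f : ℝ → ℝ≥0∞) (x : ℝ) : ℝ≥0∞ :=
  ⨆ (a : ℝ) (b : ℝ) (_ : x ∈ Set.Ioo a b),
    (μ (Set.Ioo a b))⁻¹ * ∫⁻ y in Set.Ioo a b, f y ∂μ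

theorem hzM_le {μ : Measure ℝ} {f : ℝ → ℝ≥0∞} {a b x : ℝ} (hx : x ∈ Set.Ioo a b) :
    (μ (Set.Ioo a b))⁻¹ * ∫⁻ y in Set.Ioo a b, f y ∂μ ≤ hzM μ f x :=
  le_iSup_of_le a (le_iSup_of_le b (le_iSup_of_le hx le_rfl))

theorem hzM_lt_iff {μ : Measure ℝ} {f : ℝ → ℝ≥0∞} {x : ℝ} {l : ℝ≥0∞} :
    l < hzM μ f x ↔ ∃ i : ℝ × ℝ, x ∈ Set.Ioo i.1 i.2 ∧
      l < (μ (Set.Ioo i.1 i.2))⁻¹ * ∫⁻ y in Set.Ioo i.1 i.2, f y ∂μ := by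
  simp only [hzM, lt_iSup_iff]
  constructor
  · rintro ⟨a, b, h, h'⟩; exact ⟨(a, b), h, h'⟩
  · rintro ⟨⟨a, b⟩, h, h'⟩; exact ⟨a, b, h, h'⟩

theorem hzM_set_eq (μ : Measure ℝ) (f : ℝ → ℝ≥0∞) (l : ℝ≥0∞) :
    {x | l < hzM μ f x} = ⋃ i : {i : ℝ × ℝ //
      l < (μ (Set.Ioo i.1 i.2))⁻¹ * ∫⁻ y in Set.Ioo i.1 i.2, f y ∂μ},
      Set.Ioo i.1.1 i.1.2 := by
  ext x
  simp only [Set.mem_ofPred_eq, hzM_lt_iff, Set.mem_iUnion, Subtype.exists, exists_prop]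
  constructor
  · rintro ⟨i, h, h'⟩; exact ⟨i, h', h⟩
  · rintro ⟨i, h, h'⟩; exact ⟨i, h', h⟩

theorem hzM_measurable (μ : Measure ℝ) (f : ℝ → ℝ≥0∞) : Measurable (hzM μ f) := by
  refine measurable_of_Ioi fun l => ?_
  have : hzM μ f ⁻¹' Set.Ioi l = {x | l < hzM μ f x} := rfl
  rw [this, hzM_set_eq]
  exact (isOpen_iUnion fun i => isOpen_Ioo).measurableSet

theorem hz_cover (s : Finset (ℝ × ℝ)) : ∃ t ⊆ s,
    (⋃ i ∈ s, Set.Ioo i.1 i.2) ⊆ (⋃ i ∈ t, Set.Ioo i.1 i.2) ∧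
    ∀ x : ℝ, (t.filter fun i => x ∈ Set.Ioo i.1 i.2).card ≤ 2 := by
  classical
  induction s using Finset.strongInduction with
  | H s ih =>
    by_cases h : ∀ x : ℝ, (s.filter fun i => x ∈ Set.Ioo i.1 i.2).card ≤ 2
    · exact ⟨s, subset_rfl, subset_rfl, h⟩
    · push Not at h
      obtain ⟨x, hx⟩ := h
      set u := s.filter fun i => x ∈ Set.Ioo i.1 i.2 with hu
      have hne : u.Nonempty := Finset.card_pos.1 (by omega)
      obtain ⟨i0, hi0, h0⟩ := u.exists_min_image (fun i => i.1) hne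
      obtain ⟨i1, hi1, h1⟩ := u.exists_max_image (fun i => i.2) hne
      have : ∃ i2 ∈ u, i2 ≠ i0 ∧ i2 ≠ i1 := by
        by_contra hcon
        push Not at hcon
        have : u ⊆ {i0, i1} := by
          intro i hi
          by_cases h : i = i0
          · simp [h]
          · simp [hcon i hi h]
        have := (Finset.card_le_card this).trans Finset.card_le_two
        omega
      obtain ⟨i2, hi2, h20, h21⟩ := this
      have hm0 := (Finset.mem_filter.1 hi0)
      have hm1 := (Finset.mem_filter.1 hi1)
      have hm2 := (Finset.mem_filter.1 hi2)
      obtain ⟨t, ht, hc, hov⟩ := ih (s.erase i2) (Finset.erase_ssubset hm2.1)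
      refine ⟨t, ht.trans (Finset.erase_subset _ _), ?_, hov⟩
      refine subset_trans ?_ hc
      intro y hy
      simp only [Set.mem_iUnion, exists_prop] at hy ⊢
      obtain ⟨i, hi, hyi⟩ := hy
      by_cases hii : i = i2
      · subst hii
        have a0 := h0 i hi2
        have a1 := h1 i hi2
        have b0 := hm0.2
        have b1 := hm1.2
        simp only [Set.mem_Ioo] at *
        rcases le_or_gt y x with hyx | hyx
        · exact ⟨i0, Finset.mem_erase.2 ⟨h20.symm, hm0.1⟩, by linarith, by linarith⟩
        · exact ⟨i1, Finset.mem_erase.2 ⟨h21.symm, hm1.1⟩, by linarith, by linarith⟩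
      · exact ⟨i, Finset.mem_erase.2 ⟨hii, hi⟩, hyi⟩

theorem hz_finite_weak (μ : Measure ℝ) (f : ℝ → ℝ≥0∞) (hf : Measurable f) (l : ℝ≥0∞)
    (s : Finset (ℝ × ℝ))
    (hs : ∀ i ∈ s, l < (μ (Set.Ioo i.1 i.2))⁻¹ * ∫⁻ y in Set.Ioo i.1 i.2, f y ∂μ) :
    l * μ (⋃ i ∈ s, Set.Ioo i.1 i.2) ≤ 2 * ∫⁻ y, f y ∂μ := by
  classical
  obtain ⟨t, hts, hc, hov⟩ := hz_cover s
  have key : ∀ i ∈ t, l * μ (Set.Ioo i.1 i.2) ≤ ∫⁻ y in Set.Ioo i.1 i.2, f y ∂μ := by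
    intro i hi
    have h := hs i (hts hi)
    by_cases h0 : μ (Set.Ioo i.1 i.2) = 0
    · simp [h0]
    by_cases h1 : μ (Set.Ioo i.1 i.2) = ∞
    · simp [h1] at h
    rw [← ENNReal.div_eq_inv_mul] at h
    exact (ENNReal.le_div_iff_mul_le (Or.inl h0) (Or.inl h1)).1 h.le
  calc l * μ (⋃ i ∈ s, Set.Ioo i.1 i.2)
      ≤ l * μ (⋃ i ∈ t, Set.Ioo i.1 i.2) := by gcongr
    _ ≤ l * ∑ i ∈ t, μ (Set.Ioo i.1 i.2) := by
        gcongr; exact measure_biUnion_finset_le _ _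
    _ = ∑ i ∈ t, l * μ (Set.Ioo i.1 i.2) := by rw [Finset.mul_sum]
    _ ≤ ∑ i ∈ t, ∫⁻ y in Set.Ioo i.1 i.2, f y ∂μ := Finset.sum_le_sum key
    _ = ∑ i ∈ t, ∫⁻ y, (Set.Ioo i.1 i.2).indicator f y ∂μ := by
        refine Finset.sum_congr rfl fun i _ => ?_
        rw [lintegral_indicator measurableSet_Ioo]
    _ = ∫⁻ y, ∑ i ∈ t, (Set.Ioo i.1 i.2).indicator f y ∂μ := by
        rw [lintegral_finsetSum _ fun i _ => hf.indicator measurableSet_Ioo]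
    _ ≤ ∫⁻ y, 2 * f y ∂μ := by
        refine lintegral_mono fun y => ?_
        have : ∑ i ∈ t, (Set.Ioo i.1 i.2).indicator f y
            = ((t.filter fun i => y ∈ Set.Ioo i.1 i.2).card : ℝ≥0∞) * f y := by
          simp only [Set.indicator_apply]
          rw [← Finset.sum_filter, Finset.sum_const, nsmul_eq_mul]
        rw [this]
        gcongr
        exact_mod_cast hov y
    _ = 2 * ∫⁻ y, f y ∂μ := lintegral_const_mul _ hf

theorem hz_weak (μ : Measure ℝ) (f : ℝ → ℝ≥0∞) (hf : Measurable f) (l : ℝ≥0∞) :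
    l * μ {x | l < hzM μ f x} ≤ 2 * ∫⁻ y, f y ∂μ := by
  classical
  rw [hzM_set_eq]
  obtain ⟨T, hT, hTU⟩ := TopologicalSpace.isOpen_iUnion_countable
    (fun i : {i : ℝ × ℝ //
      l < (μ (Set.Ioo i.1 i.2))⁻¹ * ∫⁻ y in Set.Ioo i.1 i.2, f y ∂μ} =>
      Set.Ioo i.1.1 i.1.2) (fun i => isOpen_Ioo)
  rw [← hTU, Set.biUnion_eq_iUnion]
  have := hT.to_subtype
  have hdir : μ (⋃ x : T, Set.Ioo x.1.1.1 x.1.1.2)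
      = ⨆ s : Finset T, μ (⋃ x ∈ s, Set.Ioo x.1.1.1 x.1.1.2) := by
    rw [Set.iUnion_eq_iUnion_finset]
    exact Directed.measure_iUnion (Monotone.directed_le fun s t hst =>
      Set.biUnion_mono (fun x hx => Finset.mem_of_subset hst hx) fun _ _ => subset_rfl)
  rw [hdir, ENNReal.mul_iSup]
  refine iSup_le fun s => ?_
  have := hz_finite_weak μ f hf l (s.image fun x => x.1.1) (by
    intro i hi
    obtain ⟨x, _, rfl⟩ := Finset.mem_image.1 hi
    exact x.1.2)
  rwa [Finset.set_biUnion_finset_image] at this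

theorem hz_weak_trunc (μ : Measure ℝ) (f : ℝ → ℝ≥0∞) (hf : Measurable f) (l : ℝ≥0∞) :
    l * μ {x | 2 * l < hzM μ f x} ≤ 2 * ∫⁻ y, {y | l < f y}.indicator f y ∂μ := by
  have hS : MeasurableSet {y | l < f y} := measurableSet_lt measurable_const hf
  refine le_trans ?_ (hz_weak μ _ (hf.indicator hS) l)
  refine mul_le_mul_right (measure_mono ?_) _
  intro x hx
  simp only [hzM_lt_iff, Set.mem_ofPred_eq] at hx ⊢
  obtain ⟨i, hi, h⟩ := hx
  refine ⟨i, hi, ?_⟩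
  set J := Set.Ioo i.1 i.2
  have h2 : (μ J)⁻¹ * ∫⁻ y in J, f y ∂μ ≤
      (μ J)⁻¹ * ∫⁻ y in J, {y | l < f y}.indicator f y ∂μ + l := by
    calc (μ J)⁻¹ * ∫⁻ y in J, f y ∂μ
        ≤ (μ J)⁻¹ * ∫⁻ y in J, ({y | l < f y}.indicator f y + l) ∂μ := by
          gcongr with y
          by_cases hy : l < f y
          · simp [Set.indicator, hy]
          · simp [Set.indicator, hy, not_lt.1 hy]
      _ = (μ J)⁻¹ * ∫⁻ y in J, {y | l < f y}.indicator f y ∂μ + (μ J)⁻¹ * (l * μ J) := by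
          rw [lintegral_add_left (hf.indicator hS), mul_add]
          simp
      _ ≤ _ := by
          gcongr
          rw [mul_comm l, ← mul_assoc]
          calc _ ≤ 1 * l := by gcongr; exact ENNReal.inv_mul_le_one _
            _ = l := one_mul l
  have h3 := h.trans_le h2
  rw [two_mul] at h3
  exact lt_of_add_lt_add_right h3

theorem hz_two_rpow_pos (x : ℝ) : (2 : ℝ≥0∞) ^ x ≠ 0 := by
  simp [ENNReal.rpow_eq_zero_iff]

theorem hz_two_rpow_fin (x : ℝ) : (2 : ℝ≥0∞) ^ x ≠ ∞ := by
  simp [ENNReal.rpow_eq_top_iff]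

theorem hz_two_rpow_add (x y : ℝ) : (2 : ℝ≥0∞) ^ (x + y) = 2 ^ x * 2 ^ y :=
  ENNReal.rpow_add _ _ (by simp) (by simp)

def hzD (d : ℝ) : ℝ≥0∞ := ∑' m : ℤ, (2 : ℝ≥0∞) ^ (-d * |(m : ℝ)|)

theorem hz_geom {d : ℝ} (hd : 0 < d) : ∑' m : ℕ, (2 : ℝ≥0∞) ^ (-d * (m : ℝ)) ≠ ∞ := by
  have h1 : ∀ m : ℕ, (2 : ℝ≥0∞) ^ (-d * (m : ℝ)) = ((2 : ℝ≥0∞) ^ (-d)) ^ m := by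
    intro m; rw [ENNReal.rpow_mul, ENNReal.rpow_natCast]
  simp_rw [h1]
  rw [ENNReal.tsum_geometric]
  simp only [ne_eq, ENNReal.inv_eq_top, tsub_eq_zero_iff_le, not_le]
  exact ENNReal.rpow_lt_one_of_one_lt_of_neg (by norm_num) (by linarith)

theorem hzD_fin {d : ℝ} (hd : 0 < d) : hzD d ≠ ∞ := by
  have h : hzD d ≤ ∑' m : ℕ, (2 : ℝ≥0∞) ^ (-d * (m : ℝ))
      + ∑' m : ℕ, (2 : ℝ≥0∞) ^ (-d * (m : ℝ)) := by
    unfold hzD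
    rw [tsum_of_nat_of_neg_add_one ENNReal.summable ENNReal.summable]
    refine add_le_add (ENNReal.tsum_le_tsum fun m => ?_) (ENNReal.tsum_le_tsum fun m => ?_)
    · simp
    · refine ENNReal.rpow_le_rpow_of_exponent_le (by norm_num) ?_
      push_cast
      rw [abs_neg, abs_of_nonneg (by positivity)]
      nlinarith
  exact ne_top_of_le_ne_top (ENNReal.add_ne_top.2 ⟨hz_geom hd, hz_geom hd⟩) h

theorem hzD_shift (d : ℝ) (n : ℤ) :
    ∑' m : ℤ, (2 : ℝ≥0∞) ^ (-d * |(n : ℝ) - (m : ℝ)|) = hzD d := by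
  unfold hzD
  rw [← (Equiv.subLeft n).tsum_eq]
  simp [Equiv.subLeft]

theorem hzD_shift' (d : ℝ) (n : ℤ) :
    ∑' m : ℤ, (2 : ℝ≥0∞) ^ (-d * |(m : ℝ) - (n : ℝ)|) = hzD d := by
  rw [← hzD_shift d n]
  simp_rw [abs_sub_comm]

theorem hz_exists_dyadic {a : ℝ≥0∞} (h0 : a ≠ 0) (h1 : a ≠ ∞) :
    ∃ n : ℤ, (2 : ℝ≥0∞) ^ (n : ℝ) < a ∧ a ≤ 2 ^ ((n : ℝ) + 1) := by
  obtain ⟨n, hn⟩ := ENNReal.exists_mem_Ioc_zpow h0 h1 (y := 2) (by norm_num) (by norm_num)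
  refine ⟨n, ?_, ?_⟩
  · have := hn.1; rwa [← ENNReal.rpow_intCast] at this
  · have := hn.2; rw [← ENNReal.rpow_intCast] at this; exact_mod_cast this

theorem hz_layerA {p : ℝ} (hp : 0 < p) (a : ℝ≥0∞) :
    a ^ p ≤ ∑' k : ℤ, if 2 * (2 : ℝ≥0∞) ^ (k : ℝ) < a then (2 : ℝ≥0∞) ^ (((k : ℝ) + 2) * p)
      else 0 := by
  by_cases h0 : a = 0
  · simp [h0, hp]
  by_cases h1 : a = ∞
  · subst h1
    have : ∑' k : ℕ, (1 : ℝ≥0∞) ≤ ∑' k : ℤ, if 2 * (2 : ℝ≥0∞) ^ (k : ℝ) < ∞ then (2 : ℝ≥0∞) ^ (((k : ℝ) + 2) * p)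
        else 0 := by
      rw [tsum_of_nat_of_neg_add_one ENNReal.summable ENNReal.summable]
      refine le_trans ?_ le_self_add
      refine ENNReal.tsum_le_tsum fun k => ?_
      rw [if_pos (ENNReal.mul_lt_top (by simp) (hz_two_rpow_fin _).lt_top)]
      exact ENNReal.one_le_rpow (by norm_num) (by push_cast; positivity)
    rw [ENNReal.tsum_const_eq_top_of_ne_zero one_ne_zero] at this
    exact le_top.trans this
  obtain ⟨n, hn, hn'⟩ := hz_exists_dyadic h0 h1
  refine le_trans ?_ (ENNReal.le_tsum (n - 1))
  rw [if_pos]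
  · push_cast
    calc a ^ p ≤ (2 ^ ((n : ℝ) + 1)) ^ p := by gcongr
      _ = _ := by rw [← ENNReal.rpow_mul]; ring_nf
  · have : (2 : ℝ≥0∞) * 2 ^ (((n - 1 : ℤ)) : ℝ) = 2 ^ (n : ℝ) := by
      have h2 : (2 : ℝ≥0∞) = 2 ^ (1 : ℝ) := (ENNReal.rpow_one 2).symm
      calc (2 : ℝ≥0∞) * 2 ^ (((n - 1 : ℤ)) : ℝ) = 2 ^ (1 : ℝ) * 2 ^ (((n - 1 : ℤ)) : ℝ) := by
            rw [ENNReal.rpow_one]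
        _ = _ := by rw [← hz_two_rpow_add]; push_cast; ring_nf
    rwa [this]

theorem hz_layerB {d : ℝ} (hd : 0 < d) (a : ℝ≥0∞) :
    (∑' k : ℤ, if (2 : ℝ≥0∞) ^ (k : ℝ) < a then (2 : ℝ≥0∞) ^ ((k : ℝ) * d) else 0)
      ≤ hzD d * a ^ d := by
  by_cases h0 : a = 0
  · simp [h0]
  by_cases h1 : a = ∞
  · subst h1
    have : hzD d ≠ 0 := by
      have : (2 : ℝ≥0∞) ^ (-d * |((0 : ℤ) : ℝ)|) ≤ hzD d := ENNReal.le_tsum 0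
      intro h
      rw [h] at this
      simp at this
    rw [ENNReal.top_rpow_of_pos hd, ENNReal.mul_top this]
    exact le_top
  obtain ⟨n, hn, hn'⟩ := hz_exists_dyadic h0 h1
  calc _ ≤ ∑' k : ℤ, (2 : ℝ≥0∞) ^ (-d * |(n : ℝ) - (k : ℝ)|) * 2 ^ ((n : ℝ) * d) := by
        refine ENNReal.tsum_le_tsum fun k => ?_
        split_ifs with h
        · have h3 := h.trans_le hn'
          have h4 : k < n + 1 := by
            by_contra hcon
            have : (n : ℝ) + 1 ≤ k := by exact_mod_cast not_lt.1 hcon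
            exact absurd h3 (not_lt.2 (ENNReal.rpow_le_rpow_of_exponent_le (by norm_num) this))
          have h5 : (k : ℝ) ≤ n := by exact_mod_cast Int.lt_add_one_iff.1 h4
          rw [← hz_two_rpow_add, abs_of_nonneg (by linarith)]
          apply le_of_eq; congr 1; ring
        · simp
    _ = hzD d * 2 ^ ((n : ℝ) * d) := by rw [ENNReal.tsum_mul_right, hzD_shift]
    _ ≤ _ := by
      gcongr
      rw [ENNReal.rpow_mul]
      gcongr

theorem hz_strong {p : ℝ} (hp : 1 < p) : ∃ C : ℝ≥0∞, C ≠ ∞ ∧ ∀ (μ : Measure ℝ)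
    (f : ℝ → ℝ≥0∞), Measurable f → ∫⁻ x, hzM μ f x ^ p ∂μ ≤ C * ∫⁻ x, f x ^ p ∂μ := by
  refine ⟨2 * 2 ^ (2 * p) * hzD (p - 1), ?_, ?_⟩
  · exact ENNReal.mul_ne_top (ENNReal.mul_ne_top (by simp) (hz_two_rpow_fin _))
      (hzD_fin (by linarith))
  intro μ f hf
  have hM := hzM_measurable μ f
  have hms : ∀ k : ℤ, MeasurableSet {x | 2 * (2 : ℝ≥0∞) ^ (k : ℝ) < hzM μ f x} := fun k =>
    measurableSet_lt measurable_const hM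
  have hfs : ∀ k : ℤ, MeasurableSet {x | (2 : ℝ≥0∞) ^ (k : ℝ) < f x} := fun k =>
    measurableSet_lt measurable_const hf
  have step : ∀ k : ℤ, (2 : ℝ≥0∞) ^ (((k : ℝ) + 2) * p) * μ {x | 2 * (2 : ℝ≥0∞) ^ (k : ℝ) < hzM μ f x}
      ≤ 2 * 2 ^ (2 * p) * ∫⁻ y, (if (2 : ℝ≥0∞) ^ (k : ℝ) < f y then (2 : ℝ≥0∞) ^ ((k : ℝ) * (p - 1)) else 0) * f y ∂μ := by
    intro k
    have h1 : (2 : ℝ≥0∞) ^ (((k : ℝ) + 2) * p) = 2 ^ (2 * p) * 2 ^ ((k : ℝ) * (p - 1)) * 2 ^ (k : ℝ) := by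
      rw [← hz_two_rpow_add, ← hz_two_rpow_add]; congr 1; ring
    have h2 : ∫⁻ y, (if (2 : ℝ≥0∞) ^ (k : ℝ) < f y then (2 : ℝ≥0∞) ^ ((k : ℝ) * (p - 1)) else 0) * f y ∂μ
        = 2 ^ ((k : ℝ) * (p - 1)) * ∫⁻ y, {y | (2 : ℝ≥0∞) ^ (k : ℝ) < f y}.indicator f y ∂μ := by
      rw [← lintegral_const_mul _ (hf.indicator (hfs k))]
      refine lintegral_congr fun y => ?_
      by_cases hy : (2 : ℝ≥0∞) ^ (k : ℝ) < f y <;> simp [Set.indicator]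
    rw [h1, h2, mul_assoc]
    calc _ ≤ 2 ^ (2 * p) * 2 ^ ((k : ℝ) * (p - 1)) *
          (2 * ∫⁻ y, {y | (2 : ℝ≥0∞) ^ (k : ℝ) < f y}.indicator f y ∂μ) := by
          exact mul_le_mul_right (hz_weak_trunc μ f hf _) _
      _ = _ := by ring
  calc ∫⁻ x, hzM μ f x ^ p ∂μ
      ≤ ∫⁻ x, ∑' k : ℤ, (if 2 * (2 : ℝ≥0∞) ^ (k : ℝ) < hzM μ f x then (2 : ℝ≥0∞) ^ (((k : ℝ) + 2) * p)
      else 0) ∂μ := lintegral_mono fun x => hz_layerA (by linarith) _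
    _ = ∑' k : ℤ, (2 : ℝ≥0∞) ^ (((k : ℝ) + 2) * p) * μ {x | 2 * (2 : ℝ≥0∞) ^ (k : ℝ) < hzM μ f x} := by
      rw [lintegral_tsum fun k => (Measurable.ite (hms k) measurable_const measurable_const).aemeasurable]
      refine tsum_congr fun k => ?_
      rw [← lintegral_indicator_const (hms k)]
      refine lintegral_congr fun y => ?_
      simp [Set.indicator]
    _ ≤ ∑' k : ℤ, 2 * 2 ^ (2 * p) * ∫⁻ y, (if (2 : ℝ≥0∞) ^ (k : ℝ) < f y then (2 : ℝ≥0∞) ^ ((k : ℝ) * (p - 1)) else 0) * f y ∂μ :=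
      ENNReal.tsum_le_tsum step
    _ = 2 * 2 ^ (2 * p) * ∫⁻ y, (∑' k : ℤ, if (2 : ℝ≥0∞) ^ (k : ℝ) < f y then (2 : ℝ≥0∞) ^ ((k : ℝ) * (p - 1)) else 0) * f y ∂μ := by
      rw [ENNReal.tsum_mul_left, ← lintegral_tsum]
      · simp_rw [ENNReal.tsum_mul_right]
      · intro k
        exact ((Measurable.ite (hfs k) measurable_const measurable_const).mul hf).aemeasurable
    _ ≤ 2 * 2 ^ (2 * p) * ∫⁻ y, hzD (p - 1) * f y ^ p ∂μ := by
      refine mul_le_mul_right (lintegral_mono fun y => ?_) _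
      calc _ ≤ hzD (p - 1) * f y ^ (p - 1) * f y := by
            exact mul_le_mul_left (hz_layerB (by linarith) _) _
        _ = _ := by
          rw [mul_assoc]
          congr 1
          calc f y ^ (p - 1) * f y = f y ^ (p - 1) * f y ^ (1 : ℝ) := by rw [ENNReal.rpow_one]
            _ = _ := by
              rw [← ENNReal.rpow_add_of_nonneg _ _ (by linarith) (by norm_num)]
              congr 1; ring
    _ = _ := by rw [lintegral_const_mul _ (hf.pow_const p)]; ring

theorem hz_int_ne_zero {v : ℝ → ℝ≥0∞} (hv : Measurable v) (h0 : ∀ᵐ x, v x ≠ 0) {a b : ℝ}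
    (hab : a < b) : ∫⁻ x in Set.Ioo a b, v x ≠ 0 := by
  intro h
  rw [lintegral_eq_zero_iff hv] at h
  have h1 : ∀ᵐ x ∂(volume.restrict (Set.Ioo a b)), False := by
    filter_upwards [h, ae_restrict_of_ae h0] with x hx hx'
    exact hx' hx
  rw [Filter.eventually_false_iff_eq_bot, ae_eq_bot, Measure.restrict_eq_zero] at h1
  simp at h1
  linarith

/-- Muckenhoupt `A_p` weights with constant at most `K`. -/
structure HzA (p : ℝ) (K : ℝ≥0∞) (w : ℝ → ℝ≥0∞) : Prop where
  meas : Measurable w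
  pos : ∀ᵐ x, w x ≠ 0 ∧ w x ≠ ∞
  bd : ∀ a b : ℝ, a < b → (∫⁻ x in Set.Ioo a b, w x) *
    (∫⁻ x in Set.Ioo a b, w x ^ (-(1 / (p - 1)))) ^ (p - 1) ≤ K * ENNReal.ofReal (b - a) ^ p

theorem hz_setwd {w : ℝ → ℝ≥0∞} (hw : Measurable w) {f : ℝ → ℝ≥0∞} (hf : Measurable f)
    (a b : ℝ) : ∫⁻ x in Set.Ioo a b, f x ∂(volume.withDensity w)
      = ∫⁻ x in Set.Ioo a b, w x * f x := by
  rw [restrict_withDensity measurableSet_Ioo, lintegral_withDensity_eq_lintegral_mul _ hw hf]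
  rfl

theorem hz_lerner_aux {p : ℝ} (hp : 1 < p) {K A B L F G P : ℝ≥0∞}
    (hA0 : A ≠ 0) (hB0 : B ≠ 0) (hA : A ≠ ∞) (hB : B ≠ ∞) (hL0 : L ≠ 0) (hL : L ≠ ∞)
    (hAB : A * B ^ (p - 1) ≤ K * L ^ p) (hG : L * (B⁻¹ * F) ^ (p - 1) ≤ G)
    (hP : A⁻¹ * G ≤ P) : (L⁻¹ * F) ^ (p - 1) ≤ K * P := by
  have hp1 : 0 ≤ p - 1 := by linarith
  set b := B ^ (p - 1) with hb
  have hb0 : b ≠ 0 := by simp [hb, ENNReal.rpow_eq_zero_iff, hB0, hB]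
  have hbt : b ≠ ∞ := by simp [hb, ENNReal.rpow_eq_top_iff, hB0, hB]
  set l := L ^ p with hl
  have hl0 : l ≠ 0 := by simp [hl, ENNReal.rpow_eq_zero_iff, hL0, hL]
  have hlt : l ≠ ∞ := by simp [hl, ENNReal.rpow_eq_top_iff, hL0, hL]
  have e1 : L⁻¹ ^ (p - 1) = L * l⁻¹ := by
    rw [hl, ← ENNReal.rpow_neg, ENNReal.inv_rpow, ← ENNReal.rpow_neg]
    calc L ^ (-(p - 1)) = L ^ (1 + -p) := by congr 1; ring
      _ = _ := by rw [ENNReal.rpow_add _ _ hL0 hL, ENNReal.rpow_one]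
  have e2 : B⁻¹ ^ (p - 1) = b⁻¹ := by rw [hb, ENNReal.inv_rpow]
  rw [ENNReal.mul_rpow_of_nonneg _ _ hp1, e1]
  rw [ENNReal.mul_rpow_of_nonneg _ _ hp1, e2] at hG
  set f := F ^ (p - 1)
  have e3 : l⁻¹ ≤ K * (A⁻¹ * b⁻¹) := by
    calc l⁻¹ = l⁻¹ * (A * b) * (A⁻¹ * b⁻¹) := by
          rw [mul_assoc, show A * b * (A⁻¹ * b⁻¹) = (A * A⁻¹) * (b * b⁻¹) by ring,
            ENNReal.mul_inv_cancel hA0 hA, ENNReal.mul_inv_cancel hb0 hbt]; simp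
      _ ≤ l⁻¹ * (K * l) * (A⁻¹ * b⁻¹) := by gcongr
      _ = (l⁻¹ * l) * K * (A⁻¹ * b⁻¹) := by ring
      _ = _ := by rw [ENNReal.inv_mul_cancel hl0 hlt, one_mul]
  calc L * l⁻¹ * f ≤ L * (K * (A⁻¹ * b⁻¹)) * f := by gcongr
    _ = K * (A⁻¹ * (L * (b⁻¹ * f))) := by ring
    _ ≤ K * (A⁻¹ * G) := by gcongr
    _ ≤ K * P := by gcongr

theorem hz_weighted {p : ℝ} (hp : 1 < p) {K : ℝ≥0∞} (hK : K ≠ ∞) :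
    ∃ C : ℝ≥0∞, C ≠ ∞ ∧ ∀ w, HzA p K w → ∀ f : ℝ → ℝ≥0∞, Measurable f →
      ∫⁻ x, hzM volume f x ^ p * w x ≤ C * ∫⁻ x, f x ^ p * w x := by
  have hp1 : 0 < p - 1 := by linarith
  set q := p / (p - 1) with hq
  have hq1 : 1 < q := by rw [hq, lt_div_iff₀ hp1]; linarith
  obtain ⟨C1, hC1, h1⟩ := hz_strong hp
  obtain ⟨C2, hC2, h2⟩ := hz_strong hq1
  refine ⟨K ^ q * (C2 * C1), ?_, ?_⟩
  · exact ENNReal.mul_ne_top (ENNReal.rpow_ne_top_of_nonneg (by linarith) hK)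
      (ENNReal.mul_ne_top hC2 hC1)
  intro w hw f hf
  have hwm := hw.meas
  set σ : ℝ → ℝ≥0∞ := fun x => w x ^ (-(1 / (p - 1))) with hσ
  have hσm : Measurable σ := hwm.pow_const _
  set μw := volume.withDensity w with hμw
  set μσ := volume.withDensity σ with hμσ
  have hσ0 : ∀ᵐ x, σ x ≠ 0 ∧ σ x ≠ ∞ := by
    filter_upwards [hw.pos] with x hx
    constructor
    · simp [hσ, ENNReal.rpow_eq_zero_iff, hx.1, hx.2]
    · simp [hσ, ENNReal.rpow_eq_top_iff, hx.1, hx.2]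
  have hfσ : Measurable fun x => f x * (σ x)⁻¹ := hf.mul hσm.inv
  set φ := hzM μσ (fun x => f x * (σ x)⁻¹) with hφ
  have hφm : Measurable φ := hzM_measurable _ _
  have hgm : Measurable fun x => φ x ^ (p - 1) * (w x)⁻¹ := (hφm.pow_const _).mul hwm.inv
  set ψ := hzM μw (fun x => φ x ^ (p - 1) * (w x)⁻¹) with hψ
  have hψm : Measurable ψ := hzM_measurable _ _
  have key : ∀ x, hzM volume f x ^ (p - 1) ≤ K * ψ x := by
    intro x
    rw [← ENNReal.le_rpow_inv_iff hp1]
    refine iSup_le fun a => iSup_le fun b => iSup_le fun hx => ?_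
    rw [ENNReal.le_rpow_inv_iff hp1]
    have hab : a < b := hx.1.trans hx.2
    set A := ∫⁻ x in Set.Ioo a b, w x with hA
    set B := ∫⁻ x in Set.Ioo a b, σ x with hB
    have hA0 : A ≠ 0 := hz_int_ne_zero hwm (hw.pos.mono fun x hx => hx.1) hab
    have hB0 : B ≠ 0 := hz_int_ne_zero hσm (hσ0.mono fun x hx => hx.1) hab
    have hbd : A * B ^ (p - 1) ≤ K * ENNReal.ofReal (b - a) ^ p := hw.bd a b hab
    have hRt : K * ENNReal.ofReal (b - a) ^ p ≠ ∞ :=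
      ENNReal.mul_ne_top hK (ENNReal.rpow_ne_top_of_nonneg (by linarith) (by simp))
    have hAt : A ≠ ∞ := by
      intro h
      rw [h, ENNReal.top_mul (by simp [ENNReal.rpow_eq_zero_iff, hB0]; intro _; linarith)] at hbd
      exact hRt (top_le_iff.1 hbd)
    have hBt : B ≠ ∞ := by
      intro h
      rw [h, ENNReal.top_rpow_of_pos hp1, ENNReal.mul_top hA0] at hbd
      exact hRt (top_le_iff.1 hbd)
    have hL0 : ENNReal.ofReal (b - a) ≠ 0 := by simp; exact hab
    rw [Real.volume_Ioo]
    refine hz_lerner_aux hp (A := A) (B := B) (G := ∫⁻ y in Set.Ioo a b, φ y ^ (p - 1))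
      hA0 hB0 hAt hBt hL0 (by simp) hbd ?_ ?_
    · have h3 : ∀ y ∈ Set.Ioo a b, B⁻¹ * ∫⁻ x in Set.Ioo a b, f x ≤ φ y := by
        intro y hy
        have := hzM_le (μ := μσ) (f := fun x => f x * (σ x)⁻¹) hy
        rw [hμσ, withDensity_apply _ measurableSet_Ioo, hz_setwd hσm hfσ] at this
        refine le_trans (le_of_eq ?_) this
        congr 1
        refine lintegral_congr_ae (ae_restrict_of_ae ?_)
        filter_upwards [hσ0] with z hz
        rw [mul_left_comm, ENNReal.mul_inv_cancel hz.1 hz.2, mul_one]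
      calc _ = ∫⁻ y in Set.Ioo a b, (B⁻¹ * ∫⁻ x in Set.Ioo a b, f x) ^ (p - 1) := by
            simp [mul_comm]
        _ ≤ _ := by
            refine setLIntegral_mono' measurableSet_Ioo fun y hy => ?_
            exact ENNReal.rpow_le_rpow (h3 y hy) hp1.le
    · have := hzM_le (μ := μw) (f := fun x => φ x ^ (p - 1) * (w x)⁻¹) hx
      rw [hμw, withDensity_apply _ measurableSet_Ioo, hz_setwd hwm hgm] at this
      refine le_trans (le_of_eq ?_) this
      congr 1
      refine lintegral_congr_ae (ae_restrict_of_ae ?_)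
      filter_upwards [hw.pos] with z hz
      rw [mul_left_comm, ENNReal.mul_inv_cancel hz.1 hz.2, mul_one]
  calc ∫⁻ x, hzM volume f x ^ p * w x
      ≤ ∫⁻ x, (K ^ q * ψ x ^ q) * w x := by
        refine lintegral_mono fun x => mul_le_mul_left ?_ _
        calc hzM volume f x ^ p = (hzM volume f x ^ (p - 1)) ^ q := by
              rw [← ENNReal.rpow_mul]; congr 1; rw [hq]; field_simp
          _ ≤ (K * ψ x) ^ q := ENNReal.rpow_le_rpow (key x) (by linarith)
          _ = _ := ENNReal.mul_rpow_of_nonneg _ _ (by linarith)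
    _ = K ^ q * ∫⁻ x, ψ x ^ q ∂μw := by
        rw [hμw, lintegral_withDensity_eq_lintegral_mul _ hwm (hψm.pow_const q),
          ← lintegral_const_mul _ (hwm.mul (hψm.pow_const q))]
        refine lintegral_congr fun x => ?_
        simp only [Pi.mul_apply]; ring
    _ ≤ K ^ q * (C2 * ∫⁻ x, (φ x ^ (p - 1) * (w x)⁻¹) ^ q ∂μw) :=
        mul_le_mul_right (h2 μw _ hgm) _
    _ = K ^ q * (C2 * ∫⁻ x, φ x ^ p ∂μσ) := by
        congr 2
        rw [hμw, hμσ, lintegral_withDensity_eq_lintegral_mul _ hwm (hgm.pow_const q),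
          lintegral_withDensity_eq_lintegral_mul _ hσm (hφm.pow_const p)]
        refine lintegral_congr_ae ?_
        filter_upwards [hw.pos] with x hx
        simp only [Pi.mul_apply]
        rw [ENNReal.mul_rpow_of_nonneg _ _ (by linarith), ← ENNReal.rpow_mul,
          ← ENNReal.rpow_neg_one, ← ENNReal.rpow_mul]
        have e1 : (p - 1) * q = p := by rw [hq]; field_simp
        have e2 : w x * w x ^ (-1 * q) = σ x := by
          calc w x * w x ^ (-1 * q) = w x ^ (1 : ℝ) * w x ^ (-1 * q) := by rw [ENNReal.rpow_one]
            _ = w x ^ (1 + -1 * q) := (ENNReal.rpow_add _ _ hx.1 hx.2).symm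
            _ = _ := by rw [hσ]; simp only; congr 1; rw [hq]; field_simp; ring
        rw [e1, mul_left_comm, e2, mul_comm]
    _ ≤ K ^ q * (C2 * (C1 * ∫⁻ x, (f x * (σ x)⁻¹) ^ p ∂μσ)) :=
        mul_le_mul_right (mul_le_mul_right (h1 μσ _ hfσ) _) _
    _ = K ^ q * (C2 * (C1 * ∫⁻ x, f x ^ p * w x)) := by
        congr 3
        rw [hμσ, lintegral_withDensity_eq_lintegral_mul _ hσm (hfσ.pow_const p)]
        refine lintegral_congr_ae ?_
        filter_upwards [hw.pos] with x hx
        simp only [Pi.mul_apply]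
        rw [ENNReal.mul_rpow_of_nonneg _ _ (by linarith), mul_left_comm]
        congr 1
        rw [hσ]
        simp only
        rw [← ENNReal.rpow_neg, ← ENNReal.rpow_mul, ← ENNReal.rpow_add _ _ hx.1 hx.2]
        conv_rhs => rw [← ENNReal.rpow_one (w x)]
        congr 1
        field_simp
        ring
    _ = _ := by ring

/-- `A_1` weights with constant at most `C`. -/
structure HzA1 (C : ℝ≥0∞) (u : ℝ → ℝ≥0∞) : Prop where
  meas : Measurable u
  pos : ∀ᵐ x, u x ≠ 0 ∧ u x ≠ ∞
  bd : ∀ x, hzM volume u x ≤ C * u x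

theorem HzA1.int_le {C : ℝ≥0∞} {u : ℝ → ℝ≥0∞} (hu : HzA1 C u) {a b x : ℝ}
    (hx : x ∈ Set.Ioo a b) :
    (ENNReal.ofReal (b - a))⁻¹ * (∫⁻ y in Set.Ioo a b, u y) ≤ C * u x := by
  have := (hzM_le (μ := volume) (f := u) hx).trans (hu.bd x)
  rwa [Real.volume_Ioo] at this

theorem HzA1.int_fin {C : ℝ≥0∞} (hC : C ≠ ∞) {u : ℝ → ℝ≥0∞} (hu : HzA1 C u) {a b : ℝ}
    (hab : a < b) : (ENNReal.ofReal (b - a))⁻¹ * (∫⁻ y in Set.Ioo a b, u y) ≠ ∞ := by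
  have : ∃ x ∈ Set.Ioo a b, u x ≠ ∞ := by
    by_contra hcon
    push Not at hcon
    have h1 : ∀ᵐ x ∂(volume.restrict (Set.Ioo a b)), False := by
      filter_upwards [ae_restrict_of_ae hu.pos, ae_restrict_mem measurableSet_Ioo] with x hx hx'
      exact hx.2 (hcon x hx')
    rw [Filter.eventually_false_iff_eq_bot, ae_eq_bot, Measure.restrict_eq_zero] at h1
    simp at h1
    linarith
  obtain ⟨x, hx, h⟩ := this
  exact ne_top_of_le_ne_top (ENNReal.mul_ne_top hC h) (hu.int_le hx)

theorem hz_rpow_anti {x y : ℝ≥0∞} (h : x ≤ y) {z : ℝ} (hz : 0 ≤ z) : y ^ (-z) ≤ x ^ (-z) := by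
  rw [ENNReal.rpow_neg, ENNReal.rpow_neg]
  exact ENNReal.inv_le_inv.2 (ENNReal.rpow_le_rpow h hz)

theorem HzA1.toA {C : ℝ≥0∞} (hC0 : C ≠ 0) (hC : C ≠ ∞) {u v : ℝ → ℝ≥0∞} (hu : HzA1 C u)
    (hv : HzA1 C v) {r : ℝ} (hr : 1 < r) :
    HzA r (C ^ r) (fun x => u x * v x ^ (-(r - 1))) where
  meas := hu.meas.mul (hv.meas.pow_const _)
  pos := by
    filter_upwards [hu.pos, hv.pos] with x hx hx'
    constructor
    · simp [ENNReal.rpow_eq_zero_iff, ENNReal.rpow_eq_top_iff, hx, hx']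
    · refine ENNReal.mul_ne_top hx.2 ?_
      simp [ENNReal.rpow_eq_top_iff, hx, hx']
  bd := by
    intro a b hab
    have hr1 : 0 < r - 1 := by linarith
    set L := ENNReal.ofReal (b - a) with hL
    have hL0 : L ≠ 0 := by simp [hL]; exact hab
    have hLt : L ≠ ∞ := by simp [hL]
    set IU := ∫⁻ y in Set.Ioo a b, u y with hIU
    set IV := ∫⁻ y in Set.Ioo a b, v y with hIV
    have hIU0 : IU ≠ 0 := hz_int_ne_zero hu.meas (hu.pos.mono fun x hx => hx.1) hab
    have hIV0 : IV ≠ 0 := hz_int_ne_zero hv.meas (hv.pos.mono fun x hx => hx.1) hab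
    have hUt := hu.int_fin hC hab
    have hVt := hv.int_fin hC hab
    rw [← hL, ← hIU] at hUt
    rw [← hL, ← hIV] at hVt
    set s := C⁻¹ * (L⁻¹ * IU) with hs
    set t := C⁻¹ * (L⁻¹ * IV) with ht
    have hs0 : s ≠ 0 := by simp [hs, hC, hLt, hIU0]
    have ht0 : t ≠ 0 := by simp [ht, hC, hLt, hIV0]
    have hst : s ≠ ∞ := ENNReal.mul_ne_top (by simp [hC0]) hUt
    have htt : t ≠ ∞ := ENNReal.mul_ne_top (by simp [hC0]) hVt
    have eU : IU = C * L * s := by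
      rw [hs, show C * L * (C⁻¹ * (L⁻¹ * IU)) = (C * C⁻¹) * (L * L⁻¹) * IU by ring,
        ENNReal.mul_inv_cancel hC0 hC, ENNReal.mul_inv_cancel hL0 hLt]; simp
    have eV : IV = C * L * t := by
      rw [ht, show C * L * (C⁻¹ * (L⁻¹ * IV)) = (C * C⁻¹) * (L * L⁻¹) * IV by ring,
        ENNReal.mul_inv_cancel hC0 hC, ENNReal.mul_inv_cancel hL0 hLt]; simp
    have hsu : ∀ x ∈ Set.Ioo a b, s ≤ u x := by
      intro x hx
      have := hu.int_le hx
      calc s ≤ C⁻¹ * (C * u x) := by rw [hs]; gcongr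
        _ = u x := by rw [← mul_assoc, ENNReal.inv_mul_cancel hC0 hC, one_mul]
    have htv : ∀ x ∈ Set.Ioo a b, t ≤ v x := by
      intro x hx
      have := hv.int_le hx
      calc t ≤ C⁻¹ * (C * v x) := by rw [ht]; gcongr
        _ = v x := by rw [← mul_assoc, ENNReal.inv_mul_cancel hC0 hC, one_mul]
    have b1 : ∫⁻ x in Set.Ioo a b, u x * v x ^ (-(r - 1)) ≤ IU * t ^ (-(r - 1)) := by
      rw [hIU, ← lintegral_mul_const _ hu.meas]
      refine setLIntegral_mono' measurableSet_Ioo fun x hx => ?_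
      exact mul_le_mul_right (hz_rpow_anti (htv x hx) hr1.le) _
    have b2 : ∫⁻ x in Set.Ioo a b, (u x * v x ^ (-(r - 1))) ^ (-(1 / (r - 1)))
        ≤ IV * s ^ (-(1 / (r - 1))) := by
      rw [hIV, ← lintegral_mul_const _ hv.meas]
      refine lintegral_mono_ae ?_
      filter_upwards [ae_restrict_of_ae hu.pos, ae_restrict_of_ae hv.pos,
        ae_restrict_mem measurableSet_Ioo] with x hux hvx hx
      rw [ENNReal.mul_rpow_of_ne_top hux.2 (by simp [ENNReal.rpow_eq_top_iff, hvx]),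
        ← ENNReal.rpow_mul, mul_comm]
      have : -(r - 1) * -(1 / (r - 1)) = 1 := by field_simp
      rw [this, ENNReal.rpow_one]
      exact mul_le_mul_right (hz_rpow_anti (hsu x hx) (by positivity)) _
    calc _ ≤ (IU * t ^ (-(r - 1))) * (IV * s ^ (-(1 / (r - 1)))) ^ (r - 1) := by
          gcongr
      _ = (C * L * s * t ^ (-(r - 1))) * ((C * L * t) ^ (r - 1) * s⁻¹) := by
          rw [eU, eV, ENNReal.mul_rpow_of_nonneg _ _ hr1.le, ← ENNReal.rpow_mul s]
          congr 2
          rw [← ENNReal.rpow_neg_one]; congr 1; field_simp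
      _ = (C * L) * (C * L) ^ (r - 1) * (s * s⁻¹) * (t ^ (-(r - 1)) * t ^ (r - 1)) := by
          rw [ENNReal.mul_rpow_of_nonneg _ _ hr1.le]; ring
      _ = (C * L) ^ r := by
          rw [ENNReal.mul_inv_cancel hs0 hst, ← ENNReal.rpow_add _ _ ht0 htt]
          simp only [neg_add_cancel, ENNReal.rpow_zero, mul_one]
          calc (C * L) * (C * L) ^ (r - 1) = (C * L) ^ (1 : ℝ) * (C * L) ^ (r - 1) := by
                rw [ENNReal.rpow_one]
            _ = _ := by
              rw [← ENNReal.rpow_add_of_nonneg _ _ (by norm_num) hr1.le]; congr 1; ring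
      _ = _ := by rw [ENNReal.mul_rpow_of_nonneg _ _ (by linarith)]

theorem hz_tsum_rpow {ι : Type} {s : ℝ} (hs : 0 < s) (y c : ι → ℝ≥0∞) :
    (∑' k, c k * y k) ^ s ≤ (∑' k, c k) ^ s * ∑' k, y k ^ s := by
  have h : ∀ k, y k ≤ (∑' k, y k ^ s) ^ s⁻¹ := fun k => by
    rw [ENNReal.le_rpow_inv_iff hs]; exact ENNReal.le_tsum k
  calc (∑' k, c k * y k) ^ s ≤ (∑' k, c k * (∑' k, y k ^ s) ^ s⁻¹) ^ s := by
        refine ENNReal.rpow_le_rpow (ENNReal.tsum_le_tsum fun k => ?_) hs.le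
        exact mul_le_mul_right (h k) _
    _ = _ := by
      rw [ENNReal.tsum_mul_right, ENNReal.mul_rpow_of_nonneg _ _ hs.le,
        ENNReal.rpow_inv_rpow hs.ne']

theorem hzM_tsum (μ : Measure ℝ) (g : ℕ → ℝ → ℝ≥0∞) (hg : ∀ k, Measurable (g k)) (c : ℕ → ℝ≥0∞)
    (x : ℝ) : hzM μ (fun y => ∑' k, c k * g k y) x ≤ ∑' k, c k * hzM μ (g k) x := by
  refine iSup_le fun a => iSup_le fun b => iSup_le fun hx => ?_
  rw [lintegral_tsum fun k => ((hg k).const_mul _).aemeasurable, ← ENNReal.tsum_mul_left]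
  refine ENNReal.tsum_le_tsum fun k => ?_
  rw [lintegral_const_mul _ (hg k), mul_left_comm]
  exact mul_le_mul_right (hzM_le hx) _

theorem hzM_pos {h : ℝ → ℝ≥0∞} (h0 : ∫⁻ x, h x ≠ 0) (x : ℝ) :
    hzM volume h x ≠ 0 := by
  intro hM
  apply h0
  have hU : (⋃ n : ℕ, Set.Ioo (x - ((n : ℝ) + 1)) (x + ((n : ℝ) + 1))) = Set.univ := by
    refine Set.eq_univ_of_forall fun y => ?_
    obtain ⟨n, hn⟩ := exists_nat_gt |y - x|
    have := abs_lt.1 hn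
    exact Set.mem_iUnion.2 ⟨n, by constructor <;> linarith⟩
  rw [← setLIntegral_univ, ← hU]
  refine le_antisymm ?_ (zero_le)
  refine (lintegral_iUnion_le _ _).trans ?_
  simp only [nonpos_iff_eq_zero, ENNReal.tsum_eq_zero]
  intro n
  have hx : x ∈ Set.Ioo (x - ((n : ℝ) + 1)) (x + ((n : ℝ) + 1)) := by
    constructor <;> linarith [(Nat.cast_nonneg n : (0 : ℝ) ≤ n)]
  have := hzM_le (μ := volume) (f := h) hx
  rw [hM, nonpos_iff_eq_zero, mul_eq_zero] at this
  rcases this with h | h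
  · simp at h
  · exact h

theorem hz_rdf {s : ℝ} (hs : 1 < s) {B : ℝ≥0∞} (hB1 : 1 ≤ B) (hBt : B ≠ ∞) :
    ∃ C : ℝ≥0∞, C ≠ ∞ ∧ ∀ w : ℝ → ℝ≥0∞, Measurable w → (∀ᵐ x, w x ≠ 0 ∧ w x ≠ ∞) →
      (∀ f : ℝ → ℝ≥0∞, Measurable f →
        ∫⁻ x, hzM volume f x ^ s * w x ≤ B ^ s * ∫⁻ x, f x ^ s * w x) →
      ∀ h : ℝ → ℝ≥0∞, Measurable h → ∫⁻ x, h x ≠ 0 → ∫⁻ x, h x ^ s * w x ≠ ∞ →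
      ∃ V, HzA1 (4 * B) V ∧ (∀ x, h x ≤ V x) ∧
        ∫⁻ x, V x ^ s * w x ≤ C * ∫⁻ x, h x ^ s * w x := by
  have hs0 : 0 < s := by linarith
  have hB0 : B ≠ 0 := by
    intro h; rw [h] at hB1; simp at hB1
  set Z := ∑' k : ℕ, (2 : ℝ≥0∞) ^ (-1 * (k : ℝ)) with hZ
  set Y := ∑' k : ℕ, (2 : ℝ≥0∞) ^ (-s * (k : ℝ)) with hY
  have hZt : Z ≠ ∞ := hz_geom (by norm_num)
  have hYt : Y ≠ ∞ := hz_geom hs0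
  refine ⟨Z ^ s * Y, ENNReal.mul_ne_top (ENNReal.rpow_ne_top_of_nonneg hs0.le hZt) hYt, ?_⟩
  intro w hwm hwpos hM h hh hhne hhfin
  set H := ∫⁻ x, h x ^ s * w x with hH
  set g : ℕ → ℝ → ℝ≥0∞ := fun k => (hzM volume)^[k] h with hg
  have hgs : ∀ k, g (k + 1) = hzM volume (g k) := fun k => by
    simp only [hg]; exact Function.iterate_succ_apply' _ _ _
  have hgm : ∀ k, Measurable (g k) := by
    intro k
    cases k with
    | zero => exact hh
    | succ k => rw [hgs]; exact hzM_measurable _ _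
  have hgn : ∀ k : ℕ, ∫⁻ x, g k x ^ s * w x ≤ (B ^ s) ^ k * H := by
    intro k
    induction k with
    | zero => simp [hg, hH]
    | succ k ih =>
      rw [hgs]
      calc _ ≤ B ^ s * ∫⁻ x, g k x ^ s * w x := hM _ (hgm k)
        _ ≤ B ^ s * ((B ^ s) ^ k * H) := by gcongr
        _ = _ := by rw [pow_succ]; ring
  set c : ℕ → ℝ≥0∞ := fun k => ((4 * B)⁻¹) ^ k with hc
  set V : ℝ → ℝ≥0∞ := fun x => ∑' k, c k * g k x with hV
  have hVm : Measurable V := Measurable.tsum fun k => (hgm k).const_mul _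
  have h4B0 : 4 * B ≠ 0 := by simp [hB0]
  have h4Bt : 4 * B ≠ ∞ := ENNReal.mul_ne_top (by simp) hBt
  have h2B0 : 2 * B ≠ 0 := by simp [hB0]
  have h2Bt : 2 * B ≠ ∞ := ENNReal.mul_ne_top (by simp) hBt
  have hVs : ∫⁻ x, V x ^ s * w x ≤ Z ^ s * Y * H := by
    have hcc : ∀ k, c k = (2 : ℝ≥0∞) ^ (-1 * (k : ℝ)) * ((2 * B)⁻¹) ^ k := by
      intro k
      rw [ENNReal.rpow_mul, ENNReal.rpow_natCast, ENNReal.rpow_neg_one, ← mul_pow,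
        ← ENNReal.mul_inv (by simp) (by simp), ← mul_assoc]
      norm_num [hc]
    calc ∫⁻ x, V x ^ s * w x
        ≤ ∫⁻ x, Z ^ s * ∑' k, (((2 * B)⁻¹) ^ k) ^ s * (g k x ^ s * w x) := by
          refine lintegral_mono fun x => ?_
          have := hz_tsum_rpow hs0 (fun k => ((2 * B)⁻¹) ^ k * g k x)
            (fun k : ℕ => (2 : ℝ≥0∞) ^ (-1 * (k : ℝ)))
          calc V x ^ s * w x ≤ (Z ^ s * ∑' k, (((2 * B)⁻¹) ^ k * g k x) ^ s) * w x := by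
                refine mul_le_mul_left (le_trans (le_of_eq ?_) this) _
                simp only [hV, hcc, mul_assoc]
            _ = _ := by
              rw [mul_assoc, ← ENNReal.tsum_mul_right]
              simp only [ENNReal.mul_rpow_of_nonneg _ _ hs0.le, mul_assoc]
      _ = Z ^ s * ∑' k, (((2 * B)⁻¹) ^ k) ^ s * ∫⁻ x, (g k x ^ s * w x) := by
          have hm : ∀ k, Measurable fun x => g k x ^ s * w x := fun k =>
            ((hgm k).pow_const s).mul hwm
          rw [lintegral_const_mul _ (Measurable.tsum fun k => (hm k).const_mul _),
            lintegral_tsum fun k => ((hm k).const_mul _).aemeasurable]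
          congr 2
          ext k
          rw [lintegral_const_mul _ (hm k)]
      _ ≤ Z ^ s * ∑' k : ℕ, (2 : ℝ≥0∞) ^ (-s * (k : ℝ)) * H := by
          refine mul_le_mul_right (ENNReal.tsum_le_tsum fun k => ?_) _
          calc _ ≤ (((2 * B)⁻¹) ^ k) ^ s * ((B ^ s) ^ k * H) := mul_le_mul_right (hgn k) _
            _ = _ := by
              rw [← mul_assoc]
              congr 1
              have e1 : (((2 * B)⁻¹) ^ k) ^ s = (((2 * B)⁻¹) ^ s) ^ k := by
                rw [← ENNReal.rpow_natCast, ← ENNReal.rpow_mul, mul_comm (k : ℝ) s, ENNReal.rpow_mul,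
                  ENNReal.rpow_natCast]
              rw [e1, ← mul_pow, ← ENNReal.mul_rpow_of_nonneg _ _ hs0.le,
                ENNReal.mul_inv (by simp) (by simp), mul_assoc,
                ENNReal.inv_mul_cancel hB0 hBt, mul_one, ENNReal.inv_rpow, ← ENNReal.rpow_neg,
                ENNReal.rpow_mul, ENNReal.rpow_natCast]
      _ = _ := by rw [ENNReal.tsum_mul_right, mul_assoc]
  refine ⟨V, ⟨hVm, ?_, ?_⟩, ?_, hVs⟩
  · have hfin : ∫⁻ x, V x ^ s * w x ≠ ∞ := ne_top_of_le_ne_top (ENNReal.mul_ne_top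
      (ENNReal.mul_ne_top (ENNReal.rpow_ne_top_of_nonneg hs0.le hZt) hYt) hhfin) hVs
    filter_upwards [hwpos, ae_lt_top ((hVm.pow_const s).mul hwm) hfin] with x hx hx'
    constructor
    · intro h0
      have h1 : c 1 * g 1 x ≤ V x := ENNReal.le_tsum 1
      rw [h0, nonpos_iff_eq_zero, mul_eq_zero] at h1
      rcases h1 with h1 | h1
      · simp [hc] at h1
        exact h4Bt h1
      · rw [hgs] at h1
        exact hzM_pos hhne x h1
    · intro ht
      rw [Pi.mul_apply] at hx'
      simp only [ht, ENNReal.top_rpow_of_pos hs0, ENNReal.top_mul hx.1] at hx'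
      exact lt_irrefl _ hx'
  · intro x
    refine (hzM_tsum volume g hgm c x).trans ?_
    rw [hV]
    simp only
    rw [tsum_eq_zero_add' (f := fun k => c k * g k x) ENNReal.summable, mul_add]
    refine le_trans ?_ le_add_self
    rw [← ENNReal.tsum_mul_left]
    refine ENNReal.tsum_le_tsum fun k => ?_
    rw [hgs, ← mul_assoc]
    refine mul_le_mul_left (le_of_eq ?_) _
    simp only [hc]
    rw [pow_succ, mul_left_comm, ENNReal.mul_inv_cancel h4B0 h4Bt, mul_one]
  · intro x
    have h1 : c 0 * g 0 x ≤ V x := ENNReal.le_tsum 0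
    simpa [hc, hg] using h1

theorem HzA.int_fin {p : ℝ} (hp : 1 < p) {K : ℝ≥0∞} (hK : K ≠ ∞) {w : ℝ → ℝ≥0∞} (hw : HzA p K w)
    {a b : ℝ} (hab : a < b) : ∫⁻ x in Set.Ioo a b, w x ≠ ∞ := by
  have hbd := hw.bd a b hab
  have hRt : K * ENNReal.ofReal (b - a) ^ p ≠ ∞ :=
    ENNReal.mul_ne_top hK (ENNReal.rpow_ne_top_of_nonneg (by linarith) (by simp))
  have hB0 : ∫⁻ x in Set.Ioo a b, w x ^ (-(1 / (p - 1))) ≠ 0 := by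
    refine hz_int_ne_zero (hw.meas.pow_const _) ?_ hab
    filter_upwards [hw.pos] with x hx
    simp [ENNReal.rpow_eq_zero_iff, hx.1, hx.2]
  intro h
  rw [h, ENNReal.top_mul (by
    rw [Ne, ENNReal.rpow_eq_zero_iff]
    rintro (⟨h, _⟩ | ⟨_, h⟩)
    · exact hB0 h
    · linarith)] at hbd
  exact hRt (top_le_iff.1 hbd)

theorem HzA.dual {s : ℝ} (hs : 1 < s) {K : ℝ≥0∞} {w : ℝ → ℝ≥0∞} (hw : HzA s K w) :
    HzA (s / (s - 1)) (K ^ (1 / (s - 1))) (fun x => w x ^ (-(1 / (s - 1)))) where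
  meas := hw.meas.pow_const _
  pos := by
    filter_upwards [hw.pos] with x hx
    constructor
    · simp [ENNReal.rpow_eq_zero_iff, hx.1, hx.2]
    · simp [ENNReal.rpow_eq_top_iff, hx.1, hx.2]
  bd := by
    intro a b hab
    have hs1 : 0 < s - 1 := by linarith
    have e1 : s / (s - 1) - 1 = 1 / (s - 1) := by field_simp; ring
    have hθ : 0 < 1 / (s - 1) := by positivity
    simp_rw [e1, ← ENNReal.rpow_mul]
    have e2 : -(1 / (s - 1)) * -(1 / (1 / (s - 1))) = 1 := by field_simp
    simp_rw [e2, ENNReal.rpow_one]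
    have := ENNReal.rpow_le_rpow (hw.bd a b hab) hθ.le
    rw [ENNReal.mul_rpow_of_nonneg _ _ hθ.le, ENNReal.mul_rpow_of_nonneg _ _ hθ.le,
      ← ENNReal.rpow_mul, ← ENNReal.rpow_mul] at this
    have e3 : (s - 1) * (1 / (s - 1)) = 1 := by field_simp
    have e4 : s * (1 / (s - 1)) = s / (s - 1) := by field_simp
    rwa [e3, e4, ENNReal.rpow_one, mul_comm] at this

theorem hz_one_A {r : ℝ} (hr : 1 < r) : HzA r 1 (fun _ => 1) where
  meas := measurable_const
  pos := by simp
  bd := by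
    intro a b hab
    simp only [ENNReal.one_rpow, lintegral_const, one_mul, Measure.restrict_apply_univ,
      Real.volume_Ioo]
    calc _ = ENNReal.ofReal (b - a) ^ (1 : ℝ) * ENNReal.ofReal (b - a) ^ (r - 1) := by
          rw [ENNReal.rpow_one]
      _ = ENNReal.ofReal (b - a) ^ (1 + (r - 1)) := by
          rw [← ENNReal.rpow_add_of_nonneg _ _ (by norm_num) (by linarith)]
      _ ≤ _ := by apply le_of_eq; congr 1; ring

/-- Uniform weighted bounds for a family of pairs. -/
def HzGood (𝓕 : Set ((ℝ → ℝ≥0∞) × (ℝ → ℝ≥0∞))) (r : ℝ) : Prop :=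
  ∀ K : ℝ≥0∞, K ≠ ∞ → ∃ C : ℝ≥0∞, C ≠ ∞ ∧ ∀ w, HzA r K w → ∀ P ∈ 𝓕,
    ∫⁻ x, P.1 x ^ r * w x ≤ C * ∫⁻ x, P.2 x ^ r * w x

theorem hz_holder1 {r : ℝ} (hr : 1 < r) {C3 : ℝ≥0∞} {F G U V : ℝ → ℝ≥0∞}
    (hF : Measurable F) (hU : Measurable U) (hV : Measurable V)
    (hUp : ∀ᵐ x, U x ≠ 0 ∧ U x ≠ ∞) (hVp : ∀ᵐ x, V x ≠ 0 ∧ V x ≠ ∞) (hGV : ∀ x, G x ≤ V x)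
    (hFG : ∫⁻ x, F x ^ r * (U x * V x ^ (-(r - 1))) ≤
      C3 * ∫⁻ x, G x ^ r * (U x * V x ^ (-(r - 1)))) :
    ∫⁻ x, F x * U x ≤ C3 ^ (1 / r) * ∫⁻ x, V x * U x := by
  have hr0 : 0 < r := by linarith
  have hr1 : 0 < r - 1 := by linarith
  have hconj : r.HolderConjugate (r / (r - 1)) := Real.HolderConjugate.conjExponent hr
  have hG : ∫⁻ x, G x ^ r * (U x * V x ^ (-(r - 1))) ≤ ∫⁻ x, V x * U x := by
    refine lintegral_mono_ae ?_
    filter_upwards [hVp] with x hx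
    calc _ ≤ V x ^ r * (U x * V x ^ (-(r - 1))) := by
          gcongr; exact hGV x
      _ = (V x ^ r * V x ^ (-(r - 1))) * U x := by ring
      _ = _ := by
          rw [← ENNReal.rpow_add _ _ hx.1 hx.2]
          congr 1
          conv_rhs => rw [← ENNReal.rpow_one (V x)]
          congr 1; ring
  set I := ∫⁻ x, V x * U x with hI
  have h := ENNReal.lintegral_mul_le_Lp_mul_Lq volume hconj
    (f := fun x => F x * (V x ^ (-((r - 1) / r)) * U x ^ (1 / r)))
    (g := fun x => V x ^ ((r - 1) / r) * U x ^ ((r - 1) / r))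
    (hF.mul ((hV.pow_const _).mul (hU.pow_const _))).aemeasurable
    ((hV.pow_const _).mul (hU.pow_const _)).aemeasurable
  have e0 : ∫⁻ x, F x * U x = ∫⁻ x, ((fun x => F x * (V x ^ (-((r - 1) / r)) * U x ^ (1 / r))) *
      (fun x => V x ^ ((r - 1) / r) * U x ^ ((r - 1) / r))) x := by
    refine lintegral_congr_ae ?_
    filter_upwards [hUp, hVp] with x hx hx'
    simp only [Pi.mul_apply]
    rw [show F x * (V x ^ (-((r - 1) / r)) * U x ^ (1 / r)) * (V x ^ ((r - 1) / r) * U x ^ ((r - 1) / r))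
      = F x * ((V x ^ (-((r - 1) / r)) * V x ^ ((r - 1) / r)) * (U x ^ (1 / r) * U x ^ ((r - 1) / r))) by ring,
      ← ENNReal.rpow_add _ _ hx.1 hx.2, ← ENNReal.rpow_add _ _ hx'.1 hx'.2]
    have e1 : -((r - 1) / r) + (r - 1) / r = 0 := by ring
    have e2 : 1 / r + (r - 1) / r = 1 := by field_simp; ring
    rw [e1, e2]; simp
  have e1 : ∫⁻ x, (F x * (V x ^ (-((r - 1) / r)) * U x ^ (1 / r))) ^ r
      = ∫⁻ x, F x ^ r * (U x * V x ^ (-(r - 1))) := by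
    refine lintegral_congr fun x => ?_
    rw [ENNReal.mul_rpow_of_nonneg _ _ hr0.le, ENNReal.mul_rpow_of_nonneg _ _ hr0.le,
      ← ENNReal.rpow_mul, ← ENNReal.rpow_mul]
    have e1 : -((r - 1) / r) * r = -(r - 1) := by field_simp
    have e2 : 1 / r * r = 1 := by field_simp
    rw [e1, e2, ENNReal.rpow_one, mul_comm (U x)]
  have e2 : ∫⁻ x, (V x ^ ((r - 1) / r) * U x ^ ((r - 1) / r)) ^ (r / (r - 1)) = I := by
    refine lintegral_congr fun x => ?_
    rw [ENNReal.mul_rpow_of_nonneg _ _ (by positivity), ← ENNReal.rpow_mul, ← ENNReal.rpow_mul]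
    have e1 : (r - 1) / r * (r / (r - 1)) = 1 := by field_simp
    rw [e1, ENNReal.rpow_one, ENNReal.rpow_one]
  rw [e0]
  refine h.trans ?_
  rw [e1, e2]
  calc _ ≤ (C3 * I) ^ (1 / r) * I ^ (1 / (r / (r - 1))) := by
        gcongr
        exact hFG.trans (mul_le_mul_right hG _)
    _ = C3 ^ (1 / r) * (I ^ (1 / r) * I ^ (1 / (r / (r - 1)))) := by
        rw [ENNReal.mul_rpow_of_nonneg _ _ (by positivity), mul_assoc]
    _ = _ := by
        rw [← ENNReal.rpow_add_of_nonneg _ _ (by positivity) (by positivity)]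
        have : 1 / r + 1 / (r / (r - 1)) = 1 := by field_simp; ring
        rw [this, ENNReal.rpow_one]

theorem hz_holder2 {s : ℝ} (hs : 1 < s) {U V w : ℝ → ℝ≥0∞}
    (hU : Measurable U) (hV : Measurable V) (hw : Measurable w)
    (hwp : ∀ᵐ x, w x ≠ 0 ∧ w x ≠ ∞) :
    ∫⁻ x, V x * U x ≤ (∫⁻ x, V x ^ s * w x) ^ (1 / s) *
      (∫⁻ x, U x ^ (s / (s - 1)) * w x ^ (-(1 / (s - 1)))) ^ (1 / (s / (s - 1))) := by
  have hs0 : 0 < s := by linarith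
  have hs1 : 0 < s - 1 := by linarith
  have hconj : s.HolderConjugate (s / (s - 1)) := Real.HolderConjugate.conjExponent hs
  have h := ENNReal.lintegral_mul_le_Lp_mul_Lq volume hconj
    (f := fun x => V x * w x ^ (1 / s))
    (g := fun x => U x * w x ^ (-(1 / s)))
    (hV.mul (hw.pow_const _)).aemeasurable (hU.mul (hw.pow_const _)).aemeasurable
  refine le_trans (le_of_eq ?_) (h.trans (le_of_eq ?_))
  · refine lintegral_congr_ae ?_
    filter_upwards [hwp] with x hx
    simp only [Pi.mul_apply]
    rw [show V x * w x ^ (1 / s) * (U x * w x ^ (-(1 / s))) =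
      V x * U x * (w x ^ (1 / s) * w x ^ (-(1 / s))) by ring, ← ENNReal.rpow_add _ _ hx.1 hx.2]
    simp
  · congr 2
    · refine lintegral_congr fun x => ?_
      rw [ENNReal.mul_rpow_of_nonneg _ _ hs0.le, ← ENNReal.rpow_mul]
      have e2 : 1 / s * s = 1 := by field_simp
      rw [e2, ENNReal.rpow_one]
    · refine lintegral_congr fun x => ?_
      rw [ENNReal.mul_rpow_of_nonneg _ _ (by positivity), ← ENNReal.rpow_mul]
      congr 2
      field_simp

theorem hz_absorb {s : ℝ} (hs : 1 < s) {T D H : ℝ≥0∞} (hT0 : T ≠ 0) (hT : T ≠ ∞)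
    (h : T ≤ D * H ^ (1 / s) * T ^ (1 / (s / (s - 1)))) : T ≤ D ^ s * H := by
  have hs0 : 0 < s := by linarith
  have hs1 : 0 < s - 1 := by linarith
  have e : T = T ^ (1 / s) * T ^ (1 / (s / (s - 1))) := by
    rw [← ENNReal.rpow_add _ _ hT0 hT]
    have : 1 / s + 1 / (s / (s - 1)) = 1 := by field_simp; ring
    rw [this, ENNReal.rpow_one]
  have hq0 : T ^ (1 / (s / (s - 1))) ≠ 0 := by simp [ENNReal.rpow_eq_zero_iff, hT0, hT]
  have hqt : T ^ (1 / (s / (s - 1))) ≠ ∞ := by simp [ENNReal.rpow_eq_top_iff, hT0, hT]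
  have h2 : T ^ (1 / s) ≤ D * H ^ (1 / s) := by
    have h' : T ^ (1 / s) * T ^ (1 / (s / (s - 1))) ≤ D * H ^ (1 / s) * T ^ (1 / (s / (s - 1))) :=
      e ▸ h
    exact (ENNReal.mul_le_mul_iff_left hq0 hqt).1 h'
  have h3 := ENNReal.rpow_le_rpow h2 hs0.le
  rw [ENNReal.mul_rpow_of_nonneg _ _ hs0.le, ← ENNReal.rpow_mul, ← ENNReal.rpow_mul] at h3
  have : 1 / s * s = 1 := by field_simp
  rwa [this, ENNReal.rpow_one, ENNReal.rpow_one] at h3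

theorem hz_extrap {𝓕 : Set ((ℝ → ℝ≥0∞) × (ℝ → ℝ≥0∞))}
    (hm : ∀ P ∈ 𝓕, Measurable P.1 ∧ Measurable P.2) {r s : ℝ} (hr : 1 < r) (hs : 1 < s)
    (hgood : HzGood 𝓕 r) : HzGood 𝓕 s := by
  intro K hK
  have hs0 : 0 < s := by linarith
  have hs1 : 0 < s - 1 := by linarith
  set s' := s / (s - 1) with hs'
  have hs'1 : 1 < s' := by rw [hs', lt_div_iff₀ hs1]; linarith
  have hs'0 : 0 < s' := by linarith
  have hK' : K ^ (1 / (s - 1)) ≠ ∞ := ENNReal.rpow_ne_top_of_nonneg (by positivity) hK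
  obtain ⟨C1, hC1, h1⟩ := hz_weighted hs hK
  obtain ⟨C2, hC2, h2⟩ := hz_weighted hs'1 hK'
  set B := 1 + C1 ^ s⁻¹ + C2 ^ s'⁻¹ with hB
  have hB1 : 1 ≤ B := by rw [hB, add_assoc]; exact le_self_add
  have hBt : B ≠ ∞ := by
    refine ENNReal.add_ne_top.2 ⟨ENNReal.add_ne_top.2 ⟨by simp, ?_⟩, ?_⟩
    · exact ENNReal.rpow_ne_top_of_nonneg (by positivity) hC1
    · exact ENNReal.rpow_ne_top_of_nonneg (by positivity) hC2
  have hB0 : B ≠ 0 := by intro h; rw [h] at hB1; simp at hB1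
  have hCB1 : C1 ≤ B ^ s := by
    rw [← ENNReal.rpow_inv_le_iff hs0, hB]
    exact le_add_self.trans le_self_add
  have hCB2 : C2 ≤ B ^ s' := by
    rw [← ENNReal.rpow_inv_le_iff hs'0, hB]
    exact le_add_self
  obtain ⟨D1, hD1, hR1⟩ := hz_rdf hs hB1 hBt
  obtain ⟨D2, hD2, hR2⟩ := hz_rdf hs'1 hB1 hBt
  have h4B0 : 4 * B ≠ 0 := by simp [hB0]
  have h4Bt : 4 * B ≠ ∞ := ENNReal.mul_ne_top (by simp) hBt
  obtain ⟨C3, hC3, h3⟩ := hgood ((4 * B) ^ r)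
    (ENNReal.rpow_ne_top_of_nonneg (by linarith) h4Bt)
  obtain ⟨C4, hC4, h4⟩ := hgood 1 (by simp)
  set D := C3 ^ (1 / r) * (D1 ^ (1 / s) * D2 ^ (1 / s')) with hD
  have hDt : D ≠ ∞ := by
    refine ENNReal.mul_ne_top (ENNReal.rpow_ne_top_of_nonneg (by positivity) hC3)
      (ENNReal.mul_ne_top ?_ ?_)
    · exact ENNReal.rpow_ne_top_of_nonneg (by positivity) hD1
    · exact ENNReal.rpow_ne_top_of_nonneg (by positivity) hD2
  refine ⟨D ^ s + 1, ENNReal.add_ne_top.2 ⟨ENNReal.rpow_ne_top_of_nonneg hs0.le hDt, by simp⟩, ?_⟩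
  rintro w hw ⟨F, G⟩ hP
  obtain ⟨hF, hG⟩ := hm _ hP
  have h3' := fun w hw => h3 w hw _ hP
  have h4' := h4 _ (hz_one_A hr) _ hP
  clear h3 h4 hgood hm
  simp only at hF hG h3' h4' ⊢
  have hwm := hw.meas
  set H := ∫⁻ x, G x ^ s * w x with hH
  by_cases hHt : H = ∞
  · rw [hHt, ENNReal.mul_top (by simp)]; exact le_top
  refine le_trans ?_ (mul_le_mul_left le_self_add H)
  by_cases hG0 : ∫⁻ x, G x = 0
  · rw [lintegral_eq_zero_iff hG] at hG0
    have e1 : ∫⁻ x, G x ^ r * 1 = 0 := by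
      rw [lintegral_eq_zero_iff (by exact (hG.pow_const r).mul measurable_const)]
      filter_upwards [hG0] with x hx
      simp [hx]; linarith
    rw [e1, mul_zero, nonpos_iff_eq_zero,
      lintegral_eq_zero_iff (by exact (hF.pow_const r).mul measurable_const)] at h4'
    have e2 : ∫⁻ x, F x ^ s * w x = 0 := by
      rw [lintegral_eq_zero_iff (by exact (hF.pow_const s).mul hwm)]
      filter_upwards [h4'] with x hx
      have : F x = 0 := by
        simp only [mul_one, Pi.zero_apply, ENNReal.rpow_eq_zero_iff] at hx
        rcases hx with h | h
        · exact h.1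
        · linarith
      simp [this, hs0]
    rw [e2]; exact zero_le
  obtain ⟨V, hVA, hGV, hVn⟩ := hR1 w hwm hw.pos
    (fun f hf => (h1 w hw f hf).trans (mul_le_mul_left hCB1 _)) G hG hG0 hHt
  have core : ∀ Fn : ℝ → ℝ≥0∞, Measurable Fn → (∀ x, Fn x ≤ F x) →
      ∫⁻ x, Fn x ^ s * w x ≠ ∞ → ∫⁻ x, Fn x ^ s * w x ≤ D ^ s * H := by
    intro Fn hFn hFnF hT
    set T := ∫⁻ x, Fn x ^ s * w x with hTdef
    by_cases hT0 : T = 0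
    · rw [hT0]; exact zero_le
    set k : ℝ → ℝ≥0∞ := fun x => Fn x ^ (s - 1) * w x with hk
    have hkm : Measurable k := (hFn.pow_const _).mul hwm
    have hFk : ∀ x, Fn x ^ s * w x = Fn x * k x := by
      intro x
      rw [hk]; simp only
      rw [← mul_assoc]
      congr 1
      calc Fn x ^ s = Fn x ^ (1 + (s - 1)) := by congr 1; ring
        _ = Fn x ^ (1 : ℝ) * Fn x ^ (s - 1) :=
          ENNReal.rpow_add_of_nonneg _ _ (by norm_num) hs1.le
        _ = _ := by rw [ENNReal.rpow_one]
    have hk0 : ∫⁻ x, k x ≠ 0 := by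
      intro h
      apply hT0
      rw [lintegral_eq_zero_iff hkm] at h
      rw [hTdef, lintegral_eq_zero_iff (by exact (hFn.pow_const s).mul hwm)]
      filter_upwards [h] with x hx
      rw [hFk, hx]; simp
    have hkn : ∫⁻ x, k x ^ s' * w x ^ (-(1 / (s - 1))) = T := by
      refine lintegral_congr_ae ?_
      filter_upwards [hw.pos] with x hx
      rw [hk]; simp only
      rw [ENNReal.mul_rpow_of_nonneg _ _ hs'0.le, ← ENNReal.rpow_mul, mul_assoc,
        ← ENNReal.rpow_add _ _ hx.1 hx.2]
      have e1 : (s - 1) * s' = s := by rw [hs']; field_simp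
      have e2 : s' + -(1 / (s - 1)) = 1 := by
        rw [hs', ← sub_eq_add_neg, ← sub_div, div_self hs1.ne']
      rw [e1, e2, ENNReal.rpow_one]
    have hwd := hw.dual hs
    obtain ⟨U, hUA, hkU, hUn⟩ := hR2 _ hwd.meas hwd.pos
      (fun f hf => (h2 _ hwd f hf).trans (mul_le_mul_left hCB2 _)) k hkm hk0 (by rwa [hkn])
    rw [hkn] at hUn
    have hW := hUA.toA h4B0 h4Bt hVA hr
    have hH1 := hz_holder1 hr hF hUA.meas hVA.meas hUA.pos hVA.pos hGV (h3' _ hW)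
    have hH2 := hz_holder2 hs hUA.meas hVA.meas hwm hw.pos
    refine hz_absorb hs hT0 hT ?_
    calc T = ∫⁻ x, Fn x * k x := lintegral_congr hFk
      _ ≤ ∫⁻ x, F x * U x := lintegral_mono fun x => mul_le_mul' (hFnF x) (hkU x)
      _ ≤ C3 ^ (1 / r) * ∫⁻ x, V x * U x := hH1
      _ ≤ C3 ^ (1 / r) * ((D1 * H) ^ (1 / s) * (D2 * T) ^ (1 / s')) := by
          refine mul_le_mul_right (hH2.trans ?_) _
          refine mul_le_mul' (ENNReal.rpow_le_rpow hVn (by positivity))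
            (ENNReal.rpow_le_rpow hUn (by positivity))
      _ = _ := by
          rw [ENNReal.mul_rpow_of_nonneg _ _ (by positivity),
            ENNReal.mul_rpow_of_nonneg _ _ (by positivity), hD]
          ring
  -- truncation
  set S : ℕ → Set ℝ := fun n => Set.Ioo (-((n : ℝ) + 1)) ((n : ℝ) + 1) with hS
  set Fn : ℕ → ℝ → ℝ≥0∞ := fun n => (S n).indicator fun x => min (F x) n with hFn
  have hFnm : ∀ n, Measurable (Fn n) := fun n =>
    (hF.min measurable_const).indicator measurableSet_Ioo
  have hFnle : ∀ n x, Fn n x ≤ F x := by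
    intro n x
    simp only [hFn, Set.indicator_apply]
    split_ifs
    · exact min_le_left _ _
    · exact zero_le
  have hmono : Monotone Fn := by
    intro n m hnm x
    have hnm' : (n : ℝ) ≤ m := by exact_mod_cast hnm
    simp only [hFn, Set.indicator_apply]
    by_cases hx : x ∈ S n
    · have hx' : x ∈ S m := by
        simp only [hS, Set.mem_Ioo] at hx ⊢
        constructor <;> linarith
      rw [if_pos hx, if_pos hx']
      exact min_le_min le_rfl (by exact_mod_cast hnm)
    · rw [if_neg hx]; exact zero_le
  have hsup : ∀ x, F x = ⨆ n, Fn n x := by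
    intro x
    refine le_antisymm ?_ (iSup_le fun n => hFnle n x)
    obtain ⟨N, hN⟩ := exists_nat_gt |x|
    have hxN := abs_lt.1 hN
    refine le_of_forall_lt fun c hc => ?_
    obtain ⟨m, hmc⟩ := ENNReal.exists_nat_gt hc.ne_top
    refine lt_of_lt_of_le ?_ (le_iSup _ (max N m))
    have hNm : (N : ℝ) ≤ ((max N m : ℕ) : ℝ) := by exact_mod_cast le_max_left N m
    have hx : x ∈ S (max N m) := by
      simp only [hS, Set.mem_Ioo]
      constructor <;> linarith
    simp only [hFn, Set.indicator_apply]
    rw [if_pos hx]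
    refine lt_min hc (hmc.trans_le ?_)
    exact_mod_cast le_max_right N m
  have hmono2 : Monotone fun n x => Fn n x ^ s * w x := by
    intro n m hnm x
    exact mul_le_mul_left (ENNReal.rpow_le_rpow (hmono hnm x) hs0.le) _
  have hsup2 : ∀ x, F x ^ s * w x = ⨆ n, Fn n x ^ s * w x := by
    intro x
    rw [← ENNReal.iSup_mul]
    congr 1
    rw [hsup x]
    exact (ENNReal.orderIsoRpow s hs0).map_iSup _
  rw [lintegral_congr hsup2, lintegral_iSup (fun n => by exact ((hFnm n).pow_const s).mul hwm) hmono2]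
  refine iSup_le fun n => core (Fn n) (hFnm n) (hFnle n) ?_
  have hb : ∫⁻ x, Fn n x ^ s * w x ≤ (n : ℝ≥0∞) ^ s * ∫⁻ x in S n, w x := by
    rw [← lintegral_const_mul _ hwm, ← lintegral_indicator measurableSet_Ioo]
    refine lintegral_mono fun x => ?_
    simp only [hFn, Set.indicator_apply]
    split_ifs
    · exact mul_le_mul_left (ENNReal.rpow_le_rpow (min_le_right _ _) hs0.le) _
    · simp [hs0]
  refine ne_top_of_le_ne_top (ENNReal.mul_ne_top
    (ENNReal.rpow_ne_top_of_nonneg hs0.le (by simp)) (hw.int_fin hs hK ?_)) hb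
  have : (0 : ℝ) ≤ n := Nat.cast_nonneg n
  linarith

lemma hzM_rat (f : ℝ → ℝ≥0∞) (x : ℝ) :
    hzM volume f x = ⨆ (a : ℚ) (b : ℚ), (Set.Ioo (a : ℝ) (b : ℝ)).indicator
      (fun _ => (volume (Set.Ioo (a : ℝ) (b : ℝ)))⁻¹ * ∫⁻ y in Set.Ioo (a : ℝ) (b : ℝ), f y) x := by
  set R := ⨆ (a : ℚ) (b : ℚ), (Set.Ioo (a : ℝ) (b : ℝ)).indicator
      (fun _ => (volume (Set.Ioo (a : ℝ) (b : ℝ)))⁻¹ * ∫⁻ y in Set.Ioo (a : ℝ) (b : ℝ), f y) x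
      with hR
  apply le_antisymm
  · refine iSup_le fun a => iSup_le fun b => iSup_le fun hx => ?_
    have hab : 0 < b - a := by have := hx.1; have := hx.2; linarith
    rw [Real.volume_Ioo, ENNReal.inv_mul_le_iff (by simpa using hab) (by simp)]
    by_cases hRt : R = ∞
    · rw [hRt, ENNReal.mul_top (by simpa using hab)]; exact le_top
    have key : ∀ ε : ℝ, 0 < ε →
        ∫⁻ y in Set.Ioo a b, f y ≤ ENNReal.ofReal (b - a + ε) * R := by
      intro ε hε
      obtain ⟨a', ha1, ha2⟩ := exists_rat_btwn (show a - ε / 2 < a by linarith)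
      obtain ⟨b', hb1, hb2⟩ := exists_rat_btwn (show b < b + ε / 2 by linarith)
      have hx' : x ∈ Set.Ioo (a' : ℝ) (b' : ℝ) := ⟨ha2.trans hx.1, hx.2.trans hb1⟩
      have hab' : 0 < (b' : ℝ) - a' := by linarith
      have h1 : (ENNReal.ofReal ((b' : ℝ) - a'))⁻¹ * ∫⁻ y in Set.Ioo (a' : ℝ) (b' : ℝ), f y ≤ R := by
        rw [hR]
        refine le_iSup_of_le a' (le_iSup_of_le b' ?_)
        rw [Set.indicator_of_mem hx', Real.volume_Ioo]
      rw [ENNReal.inv_mul_le_iff (by simpa using hab') (by simp)] at h1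
      calc ∫⁻ y in Set.Ioo a b, f y ≤ ∫⁻ y in Set.Ioo (a' : ℝ) (b' : ℝ), f y :=
            lintegral_mono_set (Set.Ioo_subset_Ioo ha2.le hb1.le)
        _ ≤ _ := h1
        _ ≤ _ := mul_le_mul_left (ENNReal.ofReal_le_ofReal (by linarith)) _
    have ht : Tendsto (fun ε : ℝ => ENNReal.ofReal (b - a + ε) * R) (nhdsWithin 0 (Set.Ioi 0))
        (nhds (ENNReal.ofReal (b - a + 0) * R)) := by
      refine ENNReal.Tendsto.mul_const ?_ (Or.inr hRt)
      refine ENNReal.tendsto_ofReal ?_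
      exact (Continuous.tendsto (by fun_prop) 0).mono_left nhdsWithin_le_nhds
    rw [add_zero] at ht
    exact ge_of_tendsto ht (eventually_nhdsWithin_of_forall fun ε hε => key ε hε)
  · refine iSup_le fun a => iSup_le fun b => ?_
    by_cases hx : x ∈ Set.Ioo (a : ℝ) (b : ℝ)
    · rw [Set.indicator_of_mem hx]
      exact le_iSup_of_le (a : ℝ) (le_iSup_of_le (b : ℝ) (le_iSup_of_le hx le_rfl))
    · rw [Set.indicator_of_notMem hx]; exact zero_le

lemma hzM_joint {Z : Type} [MeasurableSpace Z] (f : Z → ℝ → ℝ≥0∞)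
    (hf : Measurable (Function.uncurry f)) :
    Measurable fun P : Z × ℝ => hzM volume (f P.1) P.2 := by
  simp_rw [hzM_rat]
  refine Measurable.iSup fun a => Measurable.iSup fun b => ?_
  have h1 : Measurable fun z : Z => ∫⁻ y in Set.Ioo (a : ℝ) (b : ℝ), f z y :=
    hf.lintegral_prod_right'
  have : (fun P : Z × ℝ => (Set.Ioo (a : ℝ) (b : ℝ)).indicator
      (fun _ => (volume (Set.Ioo (a : ℝ) (b : ℝ)))⁻¹ *
        ∫⁻ y in Set.Ioo (a : ℝ) (b : ℝ), f P.1 y) P.2) =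
      (Prod.snd ⁻¹' (Set.Ioo (a : ℝ) (b : ℝ))).indicator
        (fun P : Z × ℝ => (volume (Set.Ioo (a : ℝ) (b : ℝ)))⁻¹ *
        ∫⁻ y in Set.Ioo (a : ℝ) (b : ℝ), f P.1 y) := by
    rfl
  rw [this]
  exact (measurable_const.mul (h1.comp measurable_fst)).indicator
    (measurable_snd measurableSet_Ioo)

lemma herzRing_meas (k : ℤ) : MeasurableSet (herzRing k) :=
  measurableSet_Ioo.diff measurableSet_Ioo

lemma lqNormOn_eq {q : ℝ} (hq : 1 < q) (s : Set ℝ) (g : ℝ → ℝ≥0∞) :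
    lqNormOn (ENNReal.ofReal q) s g = (∫⁻ x in s, g x ^ q) ^ (1 / q) := by
  rw [lqNormOn, if_neg (by simp), ENNReal.toReal_ofReal (by linarith)]

lemma lqNormOn_pow {q : ℝ} (hq : 1 < q) (s : Set ℝ) (g : ℝ → ℝ≥0∞) :
    lqNormOn (ENNReal.ofReal q) s g ^ q = ∫⁻ x in s, g x ^ q := by
  rw [lqNormOn_eq hq, ← ENNReal.rpow_mul, one_div_mul_cancel (by linarith), ENNReal.rpow_one]

lemma lqNormOn_meas {Z : Type} [MeasurableSpace Z] {q : ℝ} (hq : 1 < q) (s : Set ℝ)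
    (g : Z → ℝ → ℝ≥0∞) (hg : Measurable (Function.uncurry g)) :
    Measurable fun z => lqNormOn (ENNReal.ofReal q) s (g z) := by
  simp_rw [lqNormOn_eq hq]
  have : Measurable (Function.uncurry fun z x => g z x ^ q) := hg.pow_const q
  exact this.lintegral_prod_right'.pow_const _

lemma lpZNorm_eq {p : ℝ} (hp : 1 < p) (a : ℤ → ℝ≥0∞) :
    lpZNorm (ENNReal.ofReal p) a = (∑' k, a k ^ p) ^ (1 / p) := by
  rw [lpZNorm, if_neg (by simp), ENNReal.toReal_ofReal (by linarith)]

lemma lpZNorm_pow {p : ℝ} (hp : 1 < p) (a : ℤ → ℝ≥0∞) :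
    lpZNorm (ENNReal.ofReal p) a ^ p = ∑' k, a k ^ p := by
  rw [lpZNorm_eq hp, ← ENNReal.rpow_mul, one_div_mul_cancel (by linarith), ENNReal.rpow_one]

lemma herzNorm1_meas {Z : Type} [MeasurableSpace Z] {α p q : ℝ} (hp : 1 < p) (hq : 1 < q)
    (g : Z → ℝ → ℝ≥0∞) (hg : Measurable (Function.uncurry g)) :
    Measurable fun z => herzNorm1 α (ENNReal.ofReal p) (ENNReal.ofReal q) (g z) := by
  unfold herzNorm1
  simp_rw [lpZNorm_eq hp]
  refine Measurable.pow_const (Measurable.tsum fun k => ?_) _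
  exact (measurable_const.mul (lqNormOn_meas hq _ g hg)).pow_const _

def hzN (n : ℕ) (α p q : Fin n → ℝ) (f : (Fin n → ℝ) → ℝ≥0∞) : ℝ≥0∞ :=
  mixedHerzNormE n α (fun i => ENNReal.ofReal (p i)) (fun i => ENNReal.ofReal (q i)) f

lemma hzN_succ (n : ℕ) (α p q : Fin (n + 1) → ℝ) (f : (Fin (n + 1) → ℝ) → ℝ≥0∞) :
    hzN (n + 1) α p q f = herzNorm1 (α (Fin.last n)) (ENNReal.ofReal (p (Fin.last n)))
      (ENNReal.ofReal (q (Fin.last n))) fun t =>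
        hzN n (Fin.init α) (Fin.init p) (Fin.init q) fun y =>
          f (Fin.snoc (α := fun _ => ℝ) y t) := rfl

lemma hz_snoc_meas (n : ℕ) :
    Measurable fun P : (Fin n → ℝ) × ℝ => (Fin.snoc (α := fun _ => ℝ) P.1 P.2 : Fin (n + 1) → ℝ) := by
  rw [measurable_pi_iff]
  intro i
  refine Fin.lastCases ?_ (fun j => ?_) i
  · simp only [Fin.snoc_last]; exact measurable_snd
  · simp only [Fin.snoc_castSucc]; exact (measurable_pi_apply j).comp measurable_fst

lemma hzN_meas (n : ℕ) : ∀ {Z : Type} [MeasurableSpace Z] (α p q : Fin n → ℝ)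
    (_ : ∀ i, 1 < p i) (_ : ∀ i, 1 < q i) (f : Z → (Fin n → ℝ) → ℝ≥0∞)
    (_ : Measurable (Function.uncurry f)), Measurable fun z => hzN n α p q (f z) := by
  induction n with
  | zero =>
    intro Z _ α p q hp hq f hf
    exact hf.of_uncurry_right
  | succ n ih =>
    intro Z _ α p q hp hq f hf
    simp_rw [hzN_succ]
    refine herzNorm1_meas (hp _) (hq _) _ ?_
    have := ih (Z := Z × ℝ) (Fin.init α) (Fin.init p) (Fin.init q) (fun i => hp _)
      (fun i => hq _) (fun P y => f P.1 (Fin.snoc (α := fun _ => ℝ) y P.2)) (by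
        refine hf.comp (Measurable.prodMk (measurable_fst.comp measurable_fst) ?_)
        exact (hz_snoc_meas n).comp (measurable_snd.prodMk (measurable_snd.comp measurable_fst)))
    exact this

lemma hz_good_H {𝓕 : Set ((ℝ → ℝ≥0∞) × (ℝ → ℝ≥0∞))} {α p q r : ℝ} (hp : 1 < p) (hq : 1 < q)
    (hr : 1 < r) (hgood : HzGood 𝓕 q) :
    HzGood {P | ∃ A B : ℝ → ℝ → ℝ≥0∞, Measurable (Function.uncurry A) ∧
      Measurable (Function.uncurry B) ∧ (∀ t, (A t, B t) ∈ 𝓕) ∧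
      P = (fun x => herzNorm1 α (ENNReal.ofReal p) (ENNReal.ofReal q) (fun t => A t x),
        fun x => herzNorm1 α (ENNReal.ofReal p) (ENNReal.ofReal q) (fun t => B t x))} r := by
  set 𝓖 : Set ((ℝ → ℝ≥0∞) × (ℝ → ℝ≥0∞)) := {P | ∃ A B : ℝ → ℝ → ℝ≥0∞,
    Measurable (Function.uncurry A) ∧
      Measurable (Function.uncurry B) ∧ (∀ t, (A t, B t) ∈ 𝓕) ∧ ∃ k : ℤ,
      P = (fun x => lqNormOn (ENNReal.ofReal q) (herzRing k) (fun t => A t x),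
        fun x => lqNormOn (ENNReal.ofReal q) (herzRing k) (fun t => B t x))} with h𝓖
  have swapm : ∀ A : ℝ → ℝ → ℝ≥0∞, Measurable (Function.uncurry A) →
      Measurable (Function.uncurry fun x t => A t x) := fun A hA => hA.comp measurable_swap
  have ident : ∀ (A : ℝ → ℝ → ℝ≥0∞) (_ : Measurable (Function.uncurry A)) (k : ℤ)
      (w : ℝ → ℝ≥0∞) (_ : Measurable w),
      ∫⁻ x, lqNormOn (ENNReal.ofReal q) (herzRing k) (fun t => A t x) ^ q * w x =
        ∫⁻ t in herzRing k, ∫⁻ x, A t x ^ q * w x := by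
    intro A hA k w hw
    simp_rw [lqNormOn_pow hq]
    have hAq : Measurable (Function.uncurry fun x t => A t x ^ q) := (swapm A hA).pow_const q
    have e : ∀ x, (∫⁻ t in herzRing k, A t x ^ q) * w x = ∫⁻ t in herzRing k, A t x ^ q * w x :=
      fun x => (lintegral_mul_const _ (by exact hAq.of_uncurry_left)).symm
    simp_rw [e]
    exact lintegral_lintegral_swap (Measurable.aemeasurable
      (hAq.mul (hw.comp measurable_fst)))
  have g1 : HzGood 𝓖 q := by
    intro K hK
    obtain ⟨C, hC, h⟩ := hgood K hK
    refine ⟨C, hC, fun w hw P hP => ?_⟩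
    obtain ⟨A, B, hA, hB, hAB, k, rfl⟩ := hP
    simp only
    rw [ident A hA k w hw.meas, ident B hB k w hw.meas, ← lintegral_const_mul' _ _ hC]
    exact lintegral_mono fun t => h w hw _ (hAB t)
  have g2 : HzGood 𝓖 p := by
    refine hz_extrap ?_ hq hp g1
    rintro P ⟨A, B, hA, hB, hAB, k, rfl⟩
    exact ⟨lqNormOn_meas hq _ _ (swapm A hA), lqNormOn_meas hq _ _ (swapm B hB)⟩
  refine hz_extrap (r := p) ?_ hp hr ?_
  · rintro P ⟨A, B, hA, hB, hAB, rfl⟩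
    exact ⟨herzNorm1_meas hp hq _ (swapm A hA), herzNorm1_meas hp hq _ (swapm B hB)⟩
  intro K hK
  obtain ⟨C, hC, h⟩ := g2 K hK
  refine ⟨C, hC, fun w hw P hP => ?_⟩
  obtain ⟨A, B, hA, hB, hAB, rfl⟩ := hP
  have ident2 : ∀ (A : ℝ → ℝ → ℝ≥0∞) (_ : Measurable (Function.uncurry A)),
      ∫⁻ x, herzNorm1 α (ENNReal.ofReal p) (ENNReal.ofReal q) (fun t => A t x) ^ p * w x =
      ∑' k : ℤ, ENNReal.ofReal ((2 : ℝ) ^ ((k : ℝ) * α)) ^ p *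
        ∫⁻ x, lqNormOn (ENNReal.ofReal q) (herzRing k) (fun t => A t x) ^ p * w x := by
    intro A hA
    unfold herzNorm1
    simp_rw [lpZNorm_pow hp, ENNReal.mul_rpow_of_nonneg _ _ (zero_le_one.trans hp.le),
      ← ENNReal.tsum_mul_right]
    have hm := fun k => ((lqNormOn_meas hq (herzRing k) _ (swapm A hA)).pow_const p)
    rw [lintegral_tsum fun k => by
      exact ((measurable_const.mul (hm k)).mul hw.meas).aemeasurable]
    refine tsum_congr fun k => ?_
    rw [← lintegral_const_mul _ (by exact (hm k).mul hw.meas)]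
    simp_rw [mul_assoc]
  simp only
  rw [ident2 A hA, ident2 B hB, ← ENNReal.tsum_mul_left]
  refine ENNReal.tsum_le_tsum fun k => ?_
  rw [mul_left_comm]
  exact mul_le_mul_right (h w hw _ ⟨A, B, hA, hB, hAB, k, rfl⟩) _

def hzFam (n : ℕ) (α p q : Fin n → ℝ) : Set ((ℝ → ℝ≥0∞) × (ℝ → ℝ≥0∞)) :=
  {P | ∃ f : ℝ → (Fin n → ℝ) → ℝ≥0∞, Measurable (Function.uncurry f) ∧
    P = (fun x => hzN n α p q fun y => hzM volume (fun s => f s y) x,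
      fun x => hzN n α p q (f x))}

lemma hzM_joint' {Z : Type} [MeasurableSpace Z] (f : ℝ → Z → ℝ≥0∞)
    (hf : Measurable (Function.uncurry f)) :
    Measurable (Function.uncurry fun x (z : Z) => hzM volume (fun s => f s z) x) := by
  have := (hzM_joint (fun z s => f s z) (hf.comp measurable_swap)).comp measurable_swap
  exact this

lemma hz_fam_aux (n : ℕ) (f : ℝ → (Fin (n + 1) → ℝ) → ℝ≥0∞) (hf : Measurable (Function.uncurry f)) :
    Measurable (Function.uncurry fun (Q : ℝ × ℝ) (y : Fin n → ℝ) =>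
      hzM volume (fun s => f s (Fin.snoc (α := fun _ => ℝ) y Q.1)) Q.2) := by
  have h0 : Measurable (Function.uncurry fun (s : ℝ) (z : (Fin n → ℝ) × ℝ) =>
      f s (Fin.snoc (α := fun _ => ℝ) z.1 z.2)) :=
    hf.comp (measurable_fst.prodMk ((hz_snoc_meas n).comp measurable_snd))
  have h1 := hzM_joint' (Z := (Fin n → ℝ) × ℝ) _ h0
  have h2 : Measurable fun Q : (ℝ × ℝ) × (Fin n → ℝ) => (Q.1.2, (Q.2, Q.1.1)) :=
    (measurable_snd.comp measurable_fst).prodMk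
      (measurable_snd.prodMk (measurable_fst.comp measurable_fst))
  have h3 := h1.comp h2
  convert h3 using 1
  ext ⟨⟨t, x⟩, y⟩
  simp only [Function.comp_apply, Function.uncurry_apply_pair]

lemma hz_fam_good (n : ℕ) : ∀ (α p q : Fin n → ℝ) (_ : ∀ i, 1 < p i) (_ : ∀ i, 1 < q i)
    (r : ℝ) (_ : 1 < r), HzGood (hzFam n α p q) r := by
  induction n with
  | zero =>
    intro α p q hp hq r hr K hK
    obtain ⟨C, hC, h⟩ := hz_weighted hr hK
    refine ⟨C, hC, fun w hw P hP => ?_⟩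
    obtain ⟨f, hf, rfl⟩ := hP
    exact h w hw _ hf.of_uncurry_right
  | succ n ih =>
    intro α p q hp hq r hr
    have h := hz_good_H (α := α (Fin.last n)) (hp (Fin.last n)) (hq (Fin.last n)) hr
      (ih (Fin.init α) (Fin.init p) (Fin.init q) (fun i => hp _) (fun i => hq _) _
        (hq (Fin.last n)))
    intro K hK
    obtain ⟨C, hC, h⟩ := h K hK
    refine ⟨C, hC, fun w hw P hP => h w hw P ?_⟩
    obtain ⟨f, hf, rfl⟩ := hP
    have hf3 : Measurable fun Q : (ℝ × ℝ) × (Fin n → ℝ) =>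
        f Q.1.2 (Fin.snoc (α := fun _ => ℝ) Q.2 Q.1.1) := by
      refine hf.comp (Measurable.prodMk (measurable_snd.comp measurable_fst) ?_)
      exact (hz_snoc_meas n).comp (measurable_snd.prodMk (measurable_fst.comp measurable_fst))
    refine ⟨fun t x => hzN n (Fin.init α) (Fin.init p) (Fin.init q) fun y =>
        hzM volume (fun s => f s (Fin.snoc (α := fun _ => ℝ) y t)) x,
      fun t x => hzN n (Fin.init α) (Fin.init p) (Fin.init q) fun y =>
        f x (Fin.snoc (α := fun _ => ℝ) y t), ?_, ?_, ?_, rfl⟩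
    · have h3 := hz_fam_aux n f hf
      exact hzN_meas n (Z := ℝ × ℝ) (Fin.init α) (Fin.init p) (Fin.init q)
        (fun i => hp _) (fun i => hq _) _ h3
    · have h3 : Measurable (Function.uncurry fun (Q : ℝ × ℝ) (y : Fin n → ℝ) =>
          f Q.2 (Fin.snoc (α := fun _ => ℝ) y Q.1)) := hf3
      exact hzN_meas n (Z := ℝ × ℝ) (Fin.init α) (Fin.init p) (Fin.init q)
        (fun i => hp _) (fun i => hq _) _ h3
    · intro t
      refine ⟨fun x y => f x (Fin.snoc (α := fun _ => ℝ) y t), ?_, rfl⟩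
      exact hf.comp (measurable_fst.prodMk
        ((hz_snoc_meas n).comp (measurable_snd.prodMk measurable_const)))

/-- power weight -/
def hzP (γ : ℝ) (x : ℝ) : ℝ≥0∞ := ENNReal.ofReal |x| ^ (-γ)

theorem hzP_meas (γ : ℝ) : Measurable (hzP γ) :=
  (ENNReal.measurable_ofReal.comp (measurable_norm (α := ℝ))).pow_const _

theorem hzP_int {γ : ℝ} (h1 : γ < 1) {ρ : ℝ} (hρ : 0 < ρ) :
    ∫⁻ y in Set.Ioo (-ρ) ρ, hzP γ y ≤ 2 * ENNReal.ofReal (ρ ^ (1 - γ) / (1 - γ)) := by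
  have hpos : ∫⁻ y in Set.Ioc 0 ρ, hzP γ y = ENNReal.ofReal (ρ ^ (1 - γ) / (1 - γ)) := by
    have hi := (intervalIntegral.intervalIntegrable_rpow' (a := 0) (b := ρ)
      (show -1 < -γ by linarith)).1
    have h2 := integral_rpow (a := 0) (b := ρ) (Or.inl (show -1 < -γ by linarith))
    rw [intervalIntegral.integral_of_le hρ.le, Real.zero_rpow (by linarith), sub_zero] at h2
    have e : 1 - γ = -γ + 1 := by ring
    rw [e, ← h2, ofReal_integral_eq_lintegral_ofReal hi]
    · refine setLIntegral_congr_fun measurableSet_Ioc fun y hy => ?_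
      simp only [hzP]
      rw [abs_of_pos hy.1, ENNReal.ofReal_rpow_of_pos hy.1]
    · refine (ae_restrict_iff' measurableSet_Ioc).2 (ae_of_all _ fun y hy => ?_)
      exact Real.rpow_nonneg hy.1.le _
  have hneg : ∫⁻ y in Set.Ico (-ρ) 0, hzP γ y = ∫⁻ y in Set.Ioc 0 ρ, hzP γ y := by
    rw [← lintegral_indicator measurableSet_Ico, ← lintegral_indicator measurableSet_Ioc,
      ← lintegral_neg_eq_self]
    refine lintegral_congr fun y => ?_
    simp only [Set.indicator_apply, hzP, abs_neg, Set.mem_Ico, Set.mem_Ioc]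
    congr 1
    apply propext
    constructor
    · rintro ⟨h, h'⟩; constructor <;> linarith
    · rintro ⟨h, h'⟩; constructor <;> linarith
  have hzero : ∫⁻ y in ({0} : Set ℝ), hzP γ y = 0 := by
    rw [Measure.restrict_singleton]; simp
  calc ∫⁻ y in Set.Ioo (-ρ) ρ, hzP γ y
      ≤ ∫⁻ y in (Set.Ico (-ρ) 0 ∪ {0}) ∪ Set.Ioc 0 ρ, hzP γ y := by
        refine lintegral_mono_set fun y hy => ?_
        rcases lt_trichotomy y 0 with h | h | h
        · exact Or.inl (Or.inl ⟨hy.1.le, h⟩)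
        · exact Or.inl (Or.inr h)
        · exact Or.inr ⟨h, hy.2.le⟩
    _ ≤ (∫⁻ y in Set.Ico (-ρ) 0 ∪ {0}, hzP γ y) + ∫⁻ y in Set.Ioc 0 ρ, hzP γ y :=
        lintegral_union_le _ _ _
    _ ≤ (∫⁻ y in Set.Ico (-ρ) 0, hzP γ y) + (∫⁻ y in ({0} : Set ℝ), hzP γ y)
        + ∫⁻ y in Set.Ioc 0 ρ, hzP γ y := add_le_add_left (lintegral_union_le _ _ _) _
    _ = _ := by rw [hneg, hpos, hzero, add_zero, two_mul]

theorem hzP_A1 {γ : ℝ} (h0 : 0 < γ) (h1 : γ < 1) : ∃ C : ℝ≥0∞, C ≠ ∞ ∧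
    ∀ x, hzM volume (hzP γ) x ≤ C * hzP γ x := by
  have hg : 0 < 1 - γ := by linarith
  refine ⟨2 ^ γ + 4 * ENNReal.ofReal ((1 - γ)⁻¹), ?_, ?_⟩
  · simp only [ne_eq, ENNReal.add_eq_top, not_or]
    exact ⟨ENNReal.rpow_ne_top_of_nonneg h0.le (by simp), by finiteness⟩
  intro x
  by_cases hx : x = 0
  · have : hzP γ x = ∞ := by simp [hzP, hx, h0]
    rw [this, ENNReal.mul_top]
    · exact le_top
    · have : (0 : ℝ≥0∞) < 2 ^ γ := ENNReal.rpow_pos (by simp) (by simp)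
      exact (lt_of_lt_of_le this le_self_add).ne'
  have hs : 0 < |x| := abs_pos.2 hx
  set s := |x| with hs'
  refine iSup_le fun a => iSup_le fun b => iSup_le fun hxI => ?_
  have hab : 0 < b - a := by have := hxI.1; have := hxI.2; linarith
  rw [Real.volume_Ioo, ENNReal.inv_mul_le_iff (by simpa using hab) (by simp)]
  have hPx : hzP γ x = ENNReal.ofReal (s ^ (-γ)) := by
    simp only [hzP]; rw [ENNReal.ofReal_rpow_of_pos hs]
  have hout : ∫⁻ y in Set.Ioo a b \ Set.Ioo (-(s / 2)) (s / 2), hzP γ y ≤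
      ENNReal.ofReal (b - a) * (2 ^ γ * hzP γ x) := by
    calc ∫⁻ y in Set.Ioo a b \ Set.Ioo (-(s / 2)) (s / 2), hzP γ y
        ≤ ∫⁻ y in Set.Ioo a b \ Set.Ioo (-(s / 2)) (s / 2), 2 ^ γ * hzP γ x := by
          refine setLIntegral_mono' (measurableSet_Ioo.diff measurableSet_Ioo) fun y hy => ?_
          have hy2 : s / 2 ≤ |y| := by
            by_contra hcon
            push Not at hcon
            exact hy.2 (abs_lt.1 hcon)
          have e : 2 ^ γ * hzP γ x = ENNReal.ofReal (s / 2) ^ (-γ) := by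
            simp only [hzP]
            rw [ENNReal.ofReal_div_of_pos (by norm_num), ENNReal.div_eq_inv_mul,
              ENNReal.mul_rpow_of_ne_top (by simp) (by simp), ENNReal.inv_rpow,
              ENNReal.rpow_neg (ENNReal.ofReal 2), inv_inv, ENNReal.ofReal_ofNat]
          rw [e]
          exact hz_rpow_anti (ENNReal.ofReal_le_ofReal hy2) h0.le
      _ ≤ ∫⁻ y in Set.Ioo a b, 2 ^ γ * hzP γ x := lintegral_mono_set Set.diff_subset
      _ = _ := by rw [setLIntegral_const, Real.volume_Ioo, mul_comm]
  have hin : ∫⁻ y in Set.Ioo a b ∩ Set.Ioo (-(s / 2)) (s / 2), hzP γ y ≤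
      ENNReal.ofReal (b - a) * (4 * ENNReal.ofReal ((1 - γ)⁻¹) * hzP γ x) := by
    by_cases hne : (Set.Ioo a b ∩ Set.Ioo (-(s / 2)) (s / 2)).Nonempty
    · obtain ⟨y, hy, hy2⟩ := hne
      have hlen : s / 2 ≤ b - a := by
        have h3 : |y| < s / 2 := abs_lt.2 hy2
        have h4 : |x| - |y| ≤ |x - y| := abs_sub_abs_le_abs_sub x y
        have h5 : |x - y| ≤ b - a := by
          rw [abs_le]; constructor <;> linarith [hxI.1, hxI.2, hy.1, hy.2]
        rw [← hs'] at h4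
        linarith
      calc _ ≤ ∫⁻ y in Set.Ioo (-(s / 2)) (s / 2), hzP γ y := lintegral_mono_set Set.inter_subset_right
        _ ≤ 2 * ENNReal.ofReal ((s / 2) ^ (1 - γ) / (1 - γ)) := hzP_int h1 (by linarith)
        _ ≤ 2 * ENNReal.ofReal ((b - a) * (2 * (1 - γ)⁻¹ * s ^ (-γ))) := by
            refine mul_le_mul_right (ENNReal.ofReal_le_ofReal ?_) _
            have e1 : (s / 2) ^ (1 - γ) ≤ s ^ (1 - γ) :=
              Real.rpow_le_rpow (by linarith) (by linarith) hg.le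
            have e2 : s ^ (1 - γ) = s * s ^ (-γ) := by
              rw [sub_eq_add_neg, Real.rpow_add hs, Real.rpow_one]
            have e3 : s ≤ (b - a) * 2 := by linarith
            rw [div_eq_mul_inv]
            calc (s / 2) ^ (1 - γ) * (1 - γ)⁻¹ ≤ (s * s ^ (-γ)) * (1 - γ)⁻¹ := by
                  rw [← e2]; gcongr
              _ ≤ (((b - a) * 2) * s ^ (-γ)) * (1 - γ)⁻¹ := by gcongr
              _ = _ := by ring
        _ = _ := by
            rw [hPx, ENNReal.ofReal_mul hab.le, ENNReal.ofReal_mul (by positivity),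
              ENNReal.ofReal_mul (by norm_num)]
            simp only [ENNReal.ofReal_ofNat]
            ring
    · rw [Set.not_nonempty_iff_eq_empty.1 hne]; simp
  calc ∫⁻ y in Set.Ioo a b, hzP γ y
      = (∫⁻ y in Set.Ioo a b ∩ Set.Ioo (-(s / 2)) (s / 2), hzP γ y) +
        ∫⁻ y in Set.Ioo a b \ Set.Ioo (-(s / 2)) (s / 2), hzP γ y :=
        (lintegral_inter_add_sdiff _ _ measurableSet_Ioo).symm
    _ ≤ _ := add_le_add hin hout
    _ = _ := by ring

theorem hzM_add_le {u v : ℝ → ℝ≥0∞} (hu : Measurable u) (x : ℝ) :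
    hzM volume (fun y => u y + v y) x ≤ hzM volume u x + hzM volume v x := by
  refine iSup_le fun a => iSup_le fun b => iSup_le fun hx => ?_
  rw [lintegral_add_left hu, mul_add]
  exact add_le_add (hzM_le hx) (hzM_le hx)

theorem hzM_mono_le {u v : ℝ → ℝ≥0∞} (h : ∀ y, u y ≤ v y) (x : ℝ) :
    hzM volume u x ≤ hzM volume v x := by
  refine iSup_le fun a => iSup_le fun b => iSup_le fun hx => ?_
  exact (mul_le_mul_right (lintegral_mono h) _).trans (hzM_le hx)

theorem hzM_cmul {u : ℝ → ℝ≥0∞} (hu : Measurable u) (c : ℝ≥0∞) (x : ℝ) :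
    hzM volume (fun y => c * u y) x ≤ c * hzM volume u x := by
  refine iSup_le fun a => iSup_le fun b => iSup_le fun hx => ?_
  rw [lintegral_const_mul _ hu, mul_left_comm]
  exact mul_le_mul_right (hzM_le hx) _

theorem hzP_pos (γ : ℝ) {x : ℝ} (hx : x ≠ 0) : hzP γ x ≠ 0 ∧ hzP γ x ≠ ∞ := by
  have h1 : ENNReal.ofReal |x| ≠ 0 := by simpa using hx
  have h2 : ENNReal.ofReal |x| ≠ ∞ := by simp
  exact ⟨(ENNReal.rpow_pos (pos_iff_ne_zero.2 h1) h2).ne', ENNReal.rpow_ne_top_of_ne_zero h1 h2⟩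

theorem hz_ae_ne : ∀ᵐ x : ℝ, x ≠ 0 := by
  simp [ae_iff]

theorem hz_ring_bounds {j : ℤ} {x : ℝ} (hx : x ∈ herzRing j) :
    (2 : ℝ≥0∞) ^ ((j : ℝ) - 1) ≤ ENNReal.ofReal |x| ∧ ENNReal.ofReal |x| ≤ (2 : ℝ≥0∞) ^ (j : ℝ) := by
  have e : ∀ m : ℤ, (2 : ℝ≥0∞) ^ (m : ℝ) = ENNReal.ofReal ((2 : ℝ) ^ m) := by
    intro m
    rw [← Real.rpow_intCast, ← ENNReal.ofReal_rpow_of_pos (by norm_num)]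
    simp
  have e1 : (2 : ℝ≥0∞) ^ ((j : ℝ) - 1) = ENNReal.ofReal ((2 : ℝ) ^ (j - 1)) := by
    rw [← e]; push_cast; rfl
  rw [e, e1]
  obtain ⟨h1, h2⟩ := hx
  refine ⟨ENNReal.ofReal_le_ofReal ?_, ENNReal.ofReal_le_ofReal (abs_lt.2 h1).le⟩
  by_contra hcon
  push Not at hcon
  exact h2 (abs_lt.1 hcon)

theorem hzP_ring {γ : ℝ} (h0 : 0 ≤ γ) (h1 : γ ≤ 1) {j : ℤ} {x : ℝ} (hx : x ∈ herzRing j) :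
    (2 : ℝ≥0∞) ^ (-(j : ℝ) * γ) ≤ hzP γ x ∧ hzP γ x ≤ 2 * (2 : ℝ≥0∞) ^ (-(j : ℝ) * γ) := by
  obtain ⟨hl, hu⟩ := hz_ring_bounds hx
  constructor
  · refine le_trans (le_of_eq ?_) (hz_rpow_anti hu h0)
    rw [← ENNReal.rpow_mul]; congr 1; ring
  · refine (hz_rpow_anti hl h0).trans ?_
    rw [← ENNReal.rpow_mul]
    have : ((j : ℝ) - 1) * -γ = γ + -(j : ℝ) * γ := by ring
    rw [this, hz_two_rpow_add]
    refine mul_le_mul_left ?_ _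
    calc (2 : ℝ≥0∞) ^ γ ≤ 2 ^ (1 : ℝ) := ENNReal.rpow_le_rpow_of_exponent_le (by norm_num) h1
      _ = 2 := by simp

theorem hz_weights {α q : ℝ} (hq : 1 < q) (h1 : -(1 / q) < α) (h2 : α < 1 - 1 / q) :
    ∃ (K : ℝ≥0∞) (δ : ℝ) (c0 : ℝ≥0∞), K ≠ ∞ ∧ 0 < δ ∧ c0 ≠ ∞ ∧ ∀ k : ℤ,
      ∃ w : ℝ → ℝ≥0∞, HzA q K w ∧
        (∀ x ∈ herzRing k, (2 : ℝ≥0∞) ^ ((k : ℝ) * α * q) ≤ c0 * w x) ∧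
        (∀ j : ℤ, ∀ x ∈ herzRing j,
          w x ≤ 2 * ((2 : ℝ≥0∞) ^ (-δ * |(j : ℝ) - (k : ℝ)|) * 2 ^ ((j : ℝ) * α * q))) := by
  have hq0 : 0 < q := by linarith
  have hq1 : 0 < q - 1 := by linarith
  obtain ⟨γ2, hγ2⟩ : ∃ γ2, γ2 = α + 1 / q := ⟨_, rfl⟩
  obtain ⟨γ1, hγ1⟩ : ∃ γ1, γ1 = 1 - γ2 := ⟨_, rfl⟩
  have p2 : 0 < γ2 := by linarith
  have p1 : 0 < γ1 := by linarith
  obtain ⟨c, hc⟩ : ∃ c, c = min γ1 γ2 / 2 := ⟨_, rfl⟩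
  have hcp : 0 < c := by rw [hc]; have := lt_min p1 p2; linarith
  have hc1 : c ≤ γ1 / 2 := by rw [hc]; have := min_le_left γ1 γ2; linarith
  have hc2 : c ≤ γ2 / 2 := by rw [hc]; have := min_le_right γ1 γ2; linarith
  clear hc
  have hexp : -γ1 + γ2 * (q - 1) = α * q := by
    rw [hγ1, hγ2]; field_simp; ring
  obtain ⟨A1, hA1, bA1⟩ := hzP_A1 p1 (by linarith)
  obtain ⟨A2, hA2, bA2⟩ := hzP_A1 (γ := γ1 + c) (by linarith) (by linarith)
  obtain ⟨A3, hA3, bA3⟩ := hzP_A1 p2 (by linarith)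
  obtain ⟨A4, hA4, bA4⟩ := hzP_A1 (γ := γ2 + c) (by linarith) (by linarith)
  obtain ⟨A, hA⟩ : ∃ A, A = 1 + A1 + A2 + A3 + A4 := ⟨_, rfl⟩
  have hAt : A ≠ ∞ := by rw [hA]; finiteness
  have hA0 : A ≠ 0 := by
    have : (1 : ℝ≥0∞) ≤ A := by rw [hA]; simp only [add_assoc]; exact le_self_add
    exact (lt_of_lt_of_le one_pos this).ne'
  have l1 : A1 ≤ A := by
    rw [hA, show 1 + A1 + A2 + A3 + A4 = A1 + (1 + A2 + A3 + A4) by ring]; exact le_self_add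
  have l2 : A2 ≤ A := by
    rw [hA, show 1 + A1 + A2 + A3 + A4 = A2 + (1 + A1 + A3 + A4) by ring]; exact le_self_add
  have l3 : A3 ≤ A := by
    rw [hA, show 1 + A1 + A2 + A3 + A4 = A3 + (1 + A1 + A2 + A4) by ring]; exact le_self_add
  have l4 : A4 ≤ A := by
    rw [hA, show 1 + A1 + A2 + A3 + A4 = A4 + (1 + A1 + A2 + A3) by ring]; exact le_self_add
  refine ⟨A ^ q, c * min 1 (q - 1), 4 ^ (q - 1), ENNReal.rpow_ne_top_of_nonneg hq0.le hAt,
    mul_pos hcp (lt_min one_pos hq1), ENNReal.rpow_ne_top_of_nonneg hq1.le (by simp), ?_⟩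
  intro k
  set t : ℝ≥0∞ := (2 : ℝ≥0∞) ^ ((k : ℝ) * c) with ht
  have ht0 : t ≠ 0 := hz_two_rpow_pos _
  have htt : t ≠ ∞ := hz_two_rpow_fin _
  set U : ℝ → ℝ≥0∞ := fun x => min (hzP γ1 x) (t * hzP (γ1 + c) x) with hU
  set V : ℝ → ℝ≥0∞ := fun x => hzP γ2 x + t * hzP (γ2 + c) x with hV
  have hUA : HzA1 A U := by
    refine ⟨(hzP_meas _).min (measurable_const.mul (hzP_meas _)), ?_, fun x => ?_⟩
    · filter_upwards [hz_ae_ne] with x hx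
      constructor
      · have := lt_min (pos_iff_ne_zero.2 (hzP_pos γ1 hx).1)
          (pos_iff_ne_zero.2 (mul_ne_zero ht0 (hzP_pos (γ1 + c) hx).1))
        exact this.ne'
      · exact ne_top_of_le_ne_top (hzP_pos γ1 hx).2 (min_le_left _ _)
    · rcases le_total (hzP γ1 x) (t * hzP (γ1 + c) x) with h | h
      · have e : U x = hzP γ1 x := min_eq_left h
        rw [e]
        exact (hzM_mono_le (fun y => min_le_left _ _) x).trans
          ((bA1 x).trans (mul_le_mul_left l1 _))
      · have e : U x = t * hzP (γ1 + c) x := min_eq_right h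
        rw [e]
        refine (hzM_mono_le (fun y => min_le_right _ _) x).trans
          ((hzM_cmul (hzP_meas _) t x).trans ?_)
        rw [mul_left_comm]
        exact mul_le_mul_right ((bA2 x).trans (mul_le_mul_left l2 _)) _
  have hVA : HzA1 A V := by
    refine ⟨(hzP_meas _).add (measurable_const.mul (hzP_meas _)), ?_, fun x => ?_⟩
    · filter_upwards [hz_ae_ne] with x hx
      constructor
      · simp only [hV, ne_eq, add_eq_zero, not_and]
        intro h; exact absurd h (hzP_pos γ2 hx).1
      · exact ENNReal.add_ne_top.2 ⟨(hzP_pos γ2 hx).2,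
          ENNReal.mul_ne_top htt (hzP_pos (γ2 + c) hx).2⟩
    · refine (hzM_add_le (hzP_meas _) x).trans ?_
      simp only [hV]
      rw [mul_add]
      refine add_le_add ((bA3 x).trans (mul_le_mul_left l3 _)) ?_
      refine (hzM_cmul (hzP_meas _) t x).trans ?_
      rw [mul_left_comm]
      exact mul_le_mul_right ((bA4 x).trans (mul_le_mul_left l4 _)) _
  have tmul : ∀ (j : ℤ) (γ : ℝ), t * (2 : ℝ≥0∞) ^ (-(j : ℝ) * (γ + c)) =
      2 ^ (((k : ℝ) - j) * c + -(j : ℝ) * γ) := by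
    intro j γ
    rw [ht, ← hz_two_rpow_add]; congr 1; ring
  refine ⟨_, hUA.toA hA0 hAt hVA hq, ?_, ?_⟩
  · intro x hx
    have u1 := (hzP_ring p1.le (by linarith) hx).1
    have u2 := (hzP_ring (γ := γ1 + c) (by linarith) (by linarith) hx).1
    have v1 := (hzP_ring p2.le (by linarith) hx).2
    have v2 := (hzP_ring (γ := γ2 + c) (by linarith) (by linarith) hx).2
    have hUx : (2 : ℝ≥0∞) ^ (-(k : ℝ) * γ1) ≤ U x := by
      refine le_min u1 ?_
      refine le_trans (le_of_eq ?_) (mul_le_mul_right u2 t)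
      rw [tmul]; congr 1; ring
    have hVx : V x ≤ 4 * (2 : ℝ≥0∞) ^ (-(k : ℝ) * γ2) := by
      have : t * hzP (γ2 + c) x ≤ 2 * (2 : ℝ≥0∞) ^ (-(k : ℝ) * γ2) := by
        refine (mul_le_mul_right v2 t).trans (le_of_eq ?_)
        rw [mul_left_comm, tmul]; congr 2; ring
      refine (add_le_add v1 this).trans (le_of_eq ?_)
      ring
    have h3 : (4 * (2 : ℝ≥0∞) ^ (-(k : ℝ) * γ2)) ^ (-(q - 1)) ≤ V x ^ (-(q - 1)) :=
      hz_rpow_anti hVx hq1.le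
    rw [ENNReal.mul_rpow_of_ne_top (by simp) (hz_two_rpow_fin _), ← ENNReal.rpow_mul] at h3
    calc (2 : ℝ≥0∞) ^ ((k : ℝ) * α * q)
        = (4 ^ (q - 1) * 4 ^ (-(q - 1))) * (2 ^ (-(k : ℝ) * γ1) *
            2 ^ (-(k : ℝ) * γ2 * -(q - 1))) := by
          rw [← ENNReal.rpow_add _ _ (by simp) (by simp), ← hz_two_rpow_add]
          simp only [add_neg_cancel, ENNReal.rpow_zero, one_mul]
          congr 1
          linear_combination (-(k : ℝ)) * hexp
      _ = 4 ^ (q - 1) * (2 ^ (-(k : ℝ) * γ1) *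
            (4 ^ (-(q - 1)) * 2 ^ (-(k : ℝ) * γ2 * -(q - 1)))) := by ring
      _ ≤ _ := mul_le_mul_right (mul_le_mul' hUx h3) _
  · intro j x hx
    have u1 := (hzP_ring p1.le (by linarith) hx).2
    have u2 := (hzP_ring (γ := γ1 + c) (by linarith) (by linarith) hx).2
    have v1 := (hzP_ring p2.le (by linarith) hx).1
    have v2 := (hzP_ring (γ := γ2 + c) (by linarith) (by linarith) hx).1
    rcases le_total (k : ℝ) (j : ℝ) with hkj | hkj
    · have hUx : U x ≤ 2 * 2 ^ (((k : ℝ) - j) * c + -(j : ℝ) * γ1) := by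
        refine (min_le_right _ _).trans ((mul_le_mul_right u2 t).trans (le_of_eq ?_))
        rw [mul_left_comm, tmul]
      have hVx : V x ^ (-(q - 1)) ≤ 2 ^ (-(j : ℝ) * γ2 * -(q - 1)) := by
        rw [ENNReal.rpow_mul]
        exact hz_rpow_anti (v1.trans le_self_add) hq1.le
      refine (mul_le_mul' hUx hVx).trans ?_
      rw [mul_assoc, ← hz_two_rpow_add, ← hz_two_rpow_add]
      refine mul_le_mul_right (ENNReal.rpow_le_rpow_of_exponent_le (by norm_num) ?_) _
      rw [abs_of_nonneg (by linarith)]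
      have e : (j : ℝ) * α * q = j * (-γ1 + γ2 * (q - 1)) := by rw [hexp]; ring
      rw [e]
      have : c * min 1 (q - 1) * ((j : ℝ) - k) ≤ c * 1 * ((j : ℝ) - k) :=
        mul_le_mul_of_nonneg_right (mul_le_mul_of_nonneg_left (min_le_left _ _) hcp.le)
          (by linarith)
      nlinarith
    · have hUx : U x ≤ 2 * 2 ^ (-(j : ℝ) * γ1) := (min_le_left _ _).trans u1
      have hVx : V x ^ (-(q - 1)) ≤ 2 ^ ((((k : ℝ) - j) * c + -(j : ℝ) * γ2) * -(q - 1)) := by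
        rw [ENNReal.rpow_mul]
        refine hz_rpow_anti ?_ hq1.le
        rw [← tmul]
        exact (mul_le_mul_right v2 t).trans le_add_self
      refine (mul_le_mul' hUx hVx).trans ?_
      rw [mul_assoc, ← hz_two_rpow_add, ← hz_two_rpow_add]
      refine mul_le_mul_right (ENNReal.rpow_le_rpow_of_exponent_le (by norm_num) ?_) _
      rw [abs_of_nonpos (by linarith)]
      have e : (j : ℝ) * α * q = j * (-γ1 + γ2 * (q - 1)) := by rw [hexp]; ring
      rw [e]
      have : c * min 1 (q - 1) * ((k : ℝ) - j) ≤ c * (q - 1) * ((k : ℝ) - j) :=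
        mul_le_mul_of_nonneg_right (mul_le_mul_of_nonneg_left (min_le_right _ _) hcp.le)
          (by linarith)
      nlinarith

theorem hz_ring_cover {x : ℝ} (hx : x ≠ 0) : ∃ j : ℤ, x ∈ herzRing j := by
  obtain ⟨n, h1, h2⟩ := exists_mem_Ico_zpow (abs_pos.2 hx) (one_lt_two (α := ℝ))
  refine ⟨n + 1, abs_lt.1 h2, fun h => ?_⟩
  rw [add_sub_cancel_right] at h
  exact absurd (abs_lt.2 h) (not_lt.2 h1)

theorem hz_ring_sum (g : ℝ → ℝ≥0∞) : ∫⁻ x, g x ≤ ∑' j : ℤ, ∫⁻ x in herzRing j, g x := by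
  refine le_trans ?_ (lintegral_iUnion_le _ _)
  have : (⋃ j : ℤ, herzRing j) =ᵐ[volume] Set.univ := by
    rw [ae_eq_univ]
    refine measure_mono_null (t := {0}) ?_ (by simp)
    intro x hx
    by_contra h
    exact hx (Set.mem_iUnion.2 (hz_ring_cover h))
  rw [setLIntegral_congr this, setLIntegral_univ]

theorem hz_seq {p q δ : ℝ} (hp : 1 < p) (hq : 1 < q) (hδ : 0 < δ) {C : ℝ≥0∞} (hC : C ≠ ∞) :
    ∃ C' : ℝ≥0∞, C' ≠ ∞ ∧ ∀ a b : ℤ → ℝ≥0∞,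
      (∀ k : ℤ, a k ^ q ≤ C * ∑' j : ℤ, (2 : ℝ≥0∞) ^ (-δ * |(j : ℝ) - (k : ℝ)|) * b j ^ q) →
      ∑' k, a k ^ p ≤ C' * ∑' j, b j ^ p := by
  have hq0 : 0 < q := by linarith
  have hp0 : 0 < p := by linarith
  have hs : 0 < p / q := div_pos hp0 hq0
  have hqs : q * (p / q) = p := by field_simp
  refine ⟨C ^ (p / q) * hzD (δ / 2) ^ (p / q) * hzD (δ / 2 * (p / q)), ?_, ?_⟩
  · refine ENNReal.mul_ne_top (ENNReal.mul_ne_top (ENNReal.rpow_ne_top_of_nonneg hs.le hC)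
      (ENNReal.rpow_ne_top_of_nonneg hs.le (hzD_fin (by linarith)))) (hzD_fin (by positivity))
  intro a b h
  have key : ∀ k : ℤ, a k ^ p ≤ C ^ (p / q) * hzD (δ / 2) ^ (p / q) *
      ∑' j : ℤ, (2 : ℝ≥0∞) ^ (-(δ / 2 * (p / q)) * |(j : ℝ) - (k : ℝ)|) * b j ^ p := by
    intro k
    calc a k ^ p = (a k ^ q) ^ (p / q) := by rw [← ENNReal.rpow_mul, hqs]
      _ ≤ (C * ∑' j : ℤ, (2 : ℝ≥0∞) ^ (-δ * |(j : ℝ) - (k : ℝ)|) * b j ^ q) ^ (p / q) :=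
          ENNReal.rpow_le_rpow (h k) hs.le
      _ = C ^ (p / q) * (∑' j : ℤ, (2 : ℝ≥0∞) ^ (-(δ / 2) * |(j : ℝ) - (k : ℝ)|) *
            ((2 : ℝ≥0∞) ^ (-(δ / 2) * |(j : ℝ) - (k : ℝ)|) * b j ^ q)) ^ (p / q) := by
          rw [ENNReal.mul_rpow_of_nonneg _ _ hs.le]
          congr 3
          ext j
          rw [← mul_assoc, ← hz_two_rpow_add]
          congr 2; ring
      _ ≤ C ^ (p / q) * ((∑' j : ℤ, (2 : ℝ≥0∞) ^ (-(δ / 2) * |(j : ℝ) - (k : ℝ)|)) ^ (p / q) *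
            ∑' j : ℤ, ((2 : ℝ≥0∞) ^ (-(δ / 2) * |(j : ℝ) - (k : ℝ)|) * b j ^ q) ^ (p / q)) :=
          mul_le_mul_right (hz_tsum_rpow hs _ _) _
      _ = _ := by
          rw [hzD_shift', ← mul_assoc]
          congr 2
          ext j
          rw [ENNReal.mul_rpow_of_nonneg _ _ hs.le, ← ENNReal.rpow_mul, ← ENNReal.rpow_mul, hqs]
          congr 2; ring
  refine (ENNReal.tsum_le_tsum key).trans (le_of_eq ?_)
  rw [ENNReal.tsum_mul_left, ENNReal.tsum_comm]
  simp_rw [ENNReal.tsum_mul_right, hzD_shift]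
  rw [ENNReal.tsum_mul_left, mul_assoc, mul_assoc, mul_assoc]

theorem hz_core {𝓕 : Set ((ℝ → ℝ≥0∞) × (ℝ → ℝ≥0∞))} {α p q : ℝ} (hp : 1 < p) (hq : 1 < q)
    (h1 : -(1 / q) < α) (h2 : α < 1 - 1 / q) (hgood : HzGood 𝓕 q) :
    ∃ C : ℝ≥0∞, C ≠ ∞ ∧ ∀ P ∈ 𝓕,
      herzNorm1 α (ENNReal.ofReal p) (ENNReal.ofReal q) P.1 ≤
        C * herzNorm1 α (ENNReal.ofReal p) (ENNReal.ofReal q) P.2 := by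
  have hq0 : 0 < q := by linarith
  have hp0 : 0 < p := by linarith
  obtain ⟨K, δ, c0, hK, hδ, hc0, hw⟩ := hz_weights hq h1 h2
  obtain ⟨C, hC, h⟩ := hgood K hK
  obtain ⟨C', hC', hseq⟩ := hz_seq hp hq hδ (C := c0 * (C * 2)) (by finiteness)
  refine ⟨C' ^ (1 / p), ENNReal.rpow_ne_top_of_nonneg (by positivity) hC', ?_⟩
  rintro ⟨F, G⟩ hP
  simp only
  have e2 : ∀ (k : ℤ) (H : ℝ → ℝ≥0∞),
      (ENNReal.ofReal ((2 : ℝ) ^ ((k : ℝ) * α)) *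
        lqNormOn (ENNReal.ofReal q) (herzRing k) H) ^ q =
      2 ^ ((k : ℝ) * α * q) * ∫⁻ x in herzRing k, H x ^ q := by
    intro k H
    rw [ENNReal.mul_rpow_of_nonneg _ _ hq0.le, lqNormOn_pow hq,
      ← ENNReal.ofReal_rpow_of_pos (by norm_num), ENNReal.ofReal_ofNat, ← ENNReal.rpow_mul]
  unfold herzNorm1
  rw [lpZNorm_eq hp, lpZNorm_eq hp, ← ENNReal.mul_rpow_of_nonneg _ _ (by positivity)]
  refine ENNReal.rpow_le_rpow (hseq _ _ fun k => ?_) (by positivity)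
  obtain ⟨w, hwA, hlow, hup⟩ := hw k
  simp_rw [e2]
  calc (2 : ℝ≥0∞) ^ ((k : ℝ) * α * q) * ∫⁻ x in herzRing k, F x ^ q
      = ∫⁻ x in herzRing k, 2 ^ ((k : ℝ) * α * q) * F x ^ q :=
        (lintegral_const_mul' _ _ (hz_two_rpow_fin _)).symm
    _ ≤ ∫⁻ x in herzRing k, c0 * (F x ^ q * w x) := by
        refine setLIntegral_mono' (herzRing_meas k) fun x hx => ?_
        rw [mul_comm (F x ^ q), ← mul_assoc]
        exact mul_le_mul_left (hlow x hx) _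
    _ ≤ ∫⁻ x, c0 * (F x ^ q * w x) := setLIntegral_le_lintegral _ _
    _ = c0 * ∫⁻ x, F x ^ q * w x := lintegral_const_mul' _ _ hc0
    _ ≤ c0 * (C * ∫⁻ x, G x ^ q * w x) := mul_le_mul_right (h w hwA _ hP) _
    _ ≤ c0 * (C * (2 * ∑' j : ℤ, (2 : ℝ≥0∞) ^ (-δ * |(j : ℝ) - (k : ℝ)|) *
          (2 ^ ((j : ℝ) * α * q) * ∫⁻ x in herzRing j, G x ^ q))) := by
        refine mul_le_mul_right (mul_le_mul_right ((hz_ring_sum _).trans ?_) _) _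
        rw [← ENNReal.tsum_mul_left]
        refine ENNReal.tsum_le_tsum fun j => ?_
        rw [← mul_assoc ((2 : ℝ≥0∞) ^ (-δ * |(j : ℝ) - (k : ℝ)|)), ← mul_assoc (2 : ℝ≥0∞),
          ← lintegral_const_mul' _ _ (ENNReal.mul_ne_top (by simp)
            (ENNReal.mul_ne_top (hz_two_rpow_fin _) (hz_two_rpow_fin _)))]
        refine setLIntegral_mono' (herzRing_meas j) fun x hx => ?_
        rw [mul_comm]
        exact mul_le_mul_left (hup j x hx) _
    _ = _ := by ring

theorem hz_maxVar_snoc (m : ℕ) (g : (Fin (m + 1) → ℝ) → ℝ≥0∞) (y : Fin m → ℝ) (x : ℝ) :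
    maxVar (m + 1) (Fin.last m) g (Fin.snoc (α := fun _ => ℝ) y x) =
      hzM volume (fun s => g (Fin.snoc (α := fun _ => ℝ) y s)) x := by
  unfold maxVar hzM
  simp only [Fin.snoc_last, Fin.update_snoc_last]

/-- boundedness of the maximal operator in the `n`-th variable. -/
theorem mixedHerz_maxVar_bounded (n : ℕ) (hn : 0 < n) (p q α : Fin n → ℝ)
    (hp : ∀ i, 1 < p i) (hq : ∀ i, 1 < q i)
    (hα : ∀ i, -(1 / q i) < α i ∧ α i < 1 - 1 / q i) :
    ∃ C : ℝ≥0∞, 0 < C ∧ C ≠ ∞ ∧ ∀ f : (Fin n → ℝ) → ℂ, Measurable f →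
      mixedHerzNormE n α (fun i => ENNReal.ofReal (p i)) (fun i => ENNReal.ofReal (q i))
          (maxVar n ⟨n - 1, by omega⟩ fun y => (‖f y‖₊ : ℝ≥0∞)) ≤
        C * herzNormC n α (fun i => ENNReal.ofReal (p i)) (fun i => ENNReal.ofReal (q i)) f := by
  obtain ⟨m, rfl⟩ : ∃ m, n = m + 1 := ⟨n - 1, by omega⟩
  obtain ⟨C, hC, h⟩ := hz_core (hp (Fin.last m)) (hq (Fin.last m)) (hα (Fin.last m)).1
    (hα (Fin.last m)).2 (hz_fam_good m (Fin.init α) (Fin.init p) (Fin.init q)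
      (fun i => hp _) (fun i => hq _) _ (hq (Fin.last m)))
  refine ⟨C + 1, lt_of_lt_of_le one_pos le_add_self, by finiteness, fun f hf => ?_⟩
  have hg : Measurable fun y => (‖f y‖₊ : ℝ≥0∞) := hf.nnnorm.coe_nnreal_ennreal
  set g : (Fin (m + 1) → ℝ) → ℝ≥0∞ := fun y => (‖f y‖₊ : ℝ≥0∞) with hgdef
  have hm : Measurable (Function.uncurry fun (s : ℝ) (y : Fin m → ℝ) =>
      g (Fin.snoc (α := fun _ => ℝ) y s)) :=
    hg.comp ((hz_snoc_meas m).comp measurable_swap)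
  have h3 := h _ ⟨fun s y => g (Fin.snoc (α := fun _ => ℝ) y s), hm, rfl⟩
  have e1 : mixedHerzNormE (m + 1) α (fun i => ENNReal.ofReal (p i))
      (fun i => ENNReal.ofReal (q i)) (maxVar (m + 1) (Fin.last m) g) =
      herzNorm1 (α (Fin.last m)) (ENNReal.ofReal (p (Fin.last m)))
      (ENNReal.ofReal (q (Fin.last m))) fun x =>
        hzN m (Fin.init α) (Fin.init p) (Fin.init q) fun y =>
          hzM volume (fun s => g (Fin.snoc (α := fun _ => ℝ) y s)) x := by
    change hzN (m + 1) α p q _ = _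
    rw [hzN_succ]
    simp_rw [hz_maxVar_snoc]
  have e2 : herzNormC (m + 1) α (fun i => ENNReal.ofReal (p i))
      (fun i => ENNReal.ofReal (q i)) f =
      herzNorm1 (α (Fin.last m)) (ENNReal.ofReal (p (Fin.last m)))
      (ENNReal.ofReal (q (Fin.last m))) fun x =>
        hzN m (Fin.init α) (Fin.init p) (Fin.init q) fun y =>
          g (Fin.snoc (α := fun _ => ℝ) y x) := rfl
  rw [e2]
  refine (le_of_eq e1).trans (h3.trans (mul_le_mul_left le_self_add _))
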